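/- arXiv:1008.4220 — 6 statements merged into one kernel-verified Lean document; each statement's English description precedes it below -/
import Mathlib

section
/- The function Ω : ℝ^p → ℝ defined by Ω(w) = f(|w|), where f is the Lovász extension of F, is a norm on ℝ^p (it is nonnegative, positively homogeneous, satisfies the triangle inequality, and Ω(w) = 0 implies w = 0). -/
/-!
The Lovász extension is the support function, on nonnegative vectors, of the polymatroid
`{t | ∀ A, ∑ a ∈ A, t a ≤ F A}`. The lemma `exists_greedy` (Edmonds' greedy algorithm) says that
`lovasz F w = ∑ a, w a * s a` for some nonnegative `s` in the polymatroid, which uses submodularity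
and monotonicity; `sum_mul_le_lovasz` says by Abel summation that no point of the polymatroid gives
a larger value when `w ≥ 0`.

Nonnegativity is then immediate. For the triangle inequality, take the greedy `s` of `|v + w|` and
bound `⟨s, |v + w|⟩ ≤ ⟨s, |v|⟩ + ⟨s, |w|⟩`. Homogeneity follows by comparing the greedy points of
`|w|` and `c |w|`. For definiteness, the vector `F {k} e_k` lies in the polymatroid, so
`|w k| * F {k} ≤ Ω(w)`.
-/

open Finset MeasureTheory
open scoped Classical NNReal

noncomputable section

/-- A set-function on subsets of `α` is submodular:
`F (A ∪ B) + F (A ∩ B) ≤ F A + F B`. -/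
def Submodular {α : Type*} [DecidableEq α] (F : Finset α → ℝ) : Prop :=
  ∀ A B : Finset α, F (A ∪ B) + F (A ∩ B) ≤ F A + F B

/-- A set-function is nondecreasing: `A ⊆ B → F A ≤ F B`. -/
def MonotoneF {α : Type*} (F : Finset α → ℝ) : Prop :=
  ∀ ⦃A B : Finset α⦄, A ⊆ B → F A ≤ F B

/-- A set `A` is stable for `F` if enlarging it strictly increases `F`. -/
def StableSet {α : Type*} (F : Finset α → ℝ) (A : Finset α) : Prop :=
  ∀ B : Finset α, A ⊆ B → A ≠ B → F A < F B

/-- A set `A` is separable for `F` if it can be partitioned into `k ≥ 2` nonempty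
disjoint sets on which `F` is additive. -/
def SeparableSet {α : Type*} [DecidableEq α] (F : Finset α → ℝ) (A : Finset α) : Prop :=
  ∃ P : Finset (Finset α), 2 ≤ P.card ∧ (∀ B ∈ P, B.Nonempty) ∧
    (P : Set (Finset α)).PairwiseDisjoint id ∧ P.biUnion id = A ∧ F A = ∑ B ∈ P, F B

/-- The Lovász extension of a set-function `F`, evaluated via a decreasing ordering
`w_{j_1} ≥ ⋯ ≥ w_{j_p}` of the components of `w`:
`f(w) = ∑ₖ w_{j_k} (F({j_1,…,j_k}) − F({j_1,…,j_{k−1}}))`. -/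
noncomputable def lovasz {α : Type*} [Fintype α] [DecidableEq α]
    (F : Finset α → ℝ) (w : α → ℝ) : ℝ :=
  let e : Fin (Fintype.card α) ≃ α := (Fintype.equivFin α).symm
  let σ : Equiv.Perm (Fin (Fintype.card α)) := Tuple.sort (fun i => -(w (e i)))
  ∑ k : Fin (Fintype.card α),
    w (e (σ k)) *
      (F ((Finset.univ.filter (fun j => j ≤ k)).image (fun j => e (σ j))) -
       F ((Finset.univ.filter (fun j => j < k)).image (fun j => e (σ j))))

/-- `Ω(w) = f(|w|)` where `f` is the Lovász extension of `F`. -/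
noncomputable def OmegaF {α : Type*} [Fintype α] [DecidableEq α]
    (F : Finset α → ℝ) (w : α → ℝ) : ℝ :=
  lovasz F (fun i => |w i|)

/-- The dual norm `N*(s) = sup { ⟨s, w⟩ : N(w) ≤ 1 }`. -/
noncomputable def dualNorm {α : Type*} [Fintype α] (N : (α → ℝ) → ℝ) (s : α → ℝ) : ℝ :=
  sSup {x : ℝ | ∃ w : α → ℝ, N w ≤ 1 ∧ x = ∑ i, s i * w i}

/-- The support of a vector, as a finset. -/
def suppF {α : Type*} [Fintype α] (w : α → ℝ) : Finset α :=
  Finset.univ.filter (fun i => w i ≠ 0)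

/-- The restriction `F_J` of `F` to `J`, as a set-function on subsets of `J`. -/
def Frestrict {p : ℕ} (F : Finset (Fin p) → ℝ) (J : Finset (Fin p)) :
    Finset {x : Fin p // x ∈ J} → ℝ :=
  fun A => F (A.image Subtype.val)

/-- The contraction `F^J` of `F` by `J`: `F^J(A) = F(A ∪ J) − F(J)` for `A ⊆ Jᶜ`. -/
def Fcontract {p : ℕ} (F : Finset (Fin p) → ℝ) (J : Finset (Fin p)) :
    Finset {x : Fin p // x ∈ Jᶜ} → ℝ :=
  fun A => F (A.image Subtype.val ∪ J) - F J


/-- The set of the first `m` elements of `α` in the order enumerated by `g`. -/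
def initSeg {α : Type*} [Fintype α] {n : ℕ} (g : Fin n ≃ α) (m : ℕ) : Finset α :=
  Finset.univ.filter (fun a => (g.symm a : ℕ) < m)

lemma mem_initSeg {α : Type*} [Fintype α] {n : ℕ} (g : Fin n ≃ α) (m : ℕ) (a : α) :
    a ∈ initSeg g m ↔ (g.symm a : ℕ) < m := by
  simp [initSeg]

lemma lovasz_eq {α : Type*} [Fintype α] [DecidableEq α] (F : Finset α → ℝ) (w : α → ℝ) :
    ∃ g : Fin (Fintype.card α) ≃ α, (∀ i j, i ≤ j → w (g j) ≤ w (g i)) ∧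
      lovasz F w = ∑ k, w (g k) * (F (initSeg g (k + 1)) - F (initSeg g k)) := by
  let e : Fin (Fintype.card α) ≃ α := (Fintype.equivFin α).symm
  let σ : Equiv.Perm (Fin (Fintype.card α)) := Tuple.sort (fun i => -(w (e i)))
  refine ⟨σ.trans e, ?_, ?_⟩
  · intro i j hij
    have h := Tuple.monotone_sort (fun i => -(w (e i))) hij
    simp only [Function.comp_apply, neg_le_neg_iff] at h
    exact h
  · have h1 : ∀ k : Fin (Fintype.card α),
        (Finset.univ.filter (fun j => j ≤ k)).image (fun j => e (σ j))
          = initSeg (σ.trans e) (k + 1) := by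
      intro k
      ext a
      obtain ⟨j, rfl⟩ := (σ.trans e).surjective a
      rw [mem_initSeg, Equiv.symm_apply_apply]
      change (σ.trans e) j ∈ Finset.image (σ.trans e) _ ↔ _
      rw [(σ.trans e).injective.mem_finset_image, Finset.mem_filter_univ]
      exact Fin.le_def.trans Nat.lt_succ_iff.symm
    have h2 : ∀ k : Fin (Fintype.card α),
        (Finset.univ.filter (fun j => j < k)).image (fun j => e (σ j))
          = initSeg (σ.trans e) k := by
      intro k
      ext a
      obtain ⟨j, rfl⟩ := (σ.trans e).surjective a
      rw [mem_initSeg, Equiv.symm_apply_apply]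
      change (σ.trans e) j ∈ Finset.image (σ.trans e) _ ↔ _
      rw [(σ.trans e).injective.mem_finset_image, Finset.mem_filter_univ]
      exact Fin.lt_def
    change ∑ k, w (e (σ k)) * (F ((Finset.univ.filter (fun j => j ≤ k)).image (fun j => e (σ j)))
      - F ((Finset.univ.filter (fun j => j < k)).image (fun j => e (σ j)))) = _
    simp only [h1, h2]
    rfl

lemma initSeg_succ {α : Type*} [Fintype α] [DecidableEq α] {n : ℕ} (g : Fin n ≃ α) (k : Fin n) :
    initSeg g (k + 1) = insert (g k) (initSeg g k) := by
  ext a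
  obtain ⟨j, rfl⟩ := g.surjective a
  simp only [mem_initSeg, Finset.mem_insert, Equiv.symm_apply_apply, g.injective.eq_iff,
    Fin.ext_iff]
  omega

/-- Edmonds' greedy algorithm: the marginal gains of `F` along a decreasing ordering of `w` form a
nonnegative point of the polymatroid of `F` at which `⟨w, ·⟩` equals the Lovász extension. -/
lemma exists_greedy {α : Type*} [Fintype α] [DecidableEq α] (F : Finset α → ℝ)
    (hsub : Submodular F) (hmono : MonotoneF F) (hF0 : F ∅ = 0) (w : α → ℝ) :
    ∃ s : α → ℝ, (∀ a, 0 ≤ s a) ∧ (∀ A : Finset α, ∑ a ∈ A, s a ≤ F A) ∧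
      lovasz F w = ∑ a, w a * s a := by
  obtain ⟨g, -, hg⟩ := lovasz_eq F w
  refine ⟨fun a => F (initSeg g (g.symm a + 1)) - F (initSeg g (g.symm a)), ?_, ?_, ?_⟩
  · intro a
    rw [sub_nonneg, initSeg_succ]
    exact hmono (Finset.subset_insert _ _)
  · intro A
    set s : α → ℝ := fun a => F (initSeg g (g.symm a + 1)) - F (initSeg g (g.symm a)) with hs
    have key : ∀ m : ℕ, m ≤ Fintype.card α →
        ∑ a ∈ A ∩ initSeg g m, s a ≤ F (A ∩ initSeg g m) := by
      intro m
      induction m with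
      | zero =>
        intro _
        have : initSeg g 0 = ∅ := by
          ext a
          simp [mem_initSeg]
        simp [this, hF0]
      | succ m ih =>
        intro hm
        have ih := ih (by omega)
        let k : Fin (Fintype.card α) := ⟨m, hm⟩
        have hk : initSeg g (m + 1) = insert (g k) (initSeg g m) := initSeg_succ g k
        have hnot : g k ∉ initSeg g m := by simp [mem_initSeg, k]
        by_cases hA : g k ∈ A
        · have h1 : A ∩ initSeg g (m + 1) = insert (g k) (A ∩ initSeg g m) := by
            rw [hk, Finset.inter_insert_of_mem hA]
          have h2 := hsub (A ∩ initSeg g (m + 1)) (initSeg g m)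
          have h3 : (A ∩ initSeg g (m + 1)) ∪ initSeg g m = initSeg g (m + 1) := by
            rw [h1, hk]
            ext a
            simp only [Finset.mem_union, Finset.mem_insert, Finset.mem_inter]
            tauto
          have h4 : (A ∩ initSeg g (m + 1)) ∩ initSeg g m = A ∩ initSeg g m := by
            rw [hk]
            ext a
            simp only [Finset.mem_insert, Finset.mem_inter]
            tauto
          have h5 : s (g k) = F (initSeg g (m + 1)) - F (initSeg g m) := by
            simp [hs, k]
          rw [h3, h4] at h2
          have h6 : ∑ a ∈ A ∩ initSeg g (m + 1), s a
              = s (g k) + ∑ a ∈ A ∩ initSeg g m, s a := by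
            rw [h1, Finset.sum_insert (by simp [hnot])]
          linarith
        · rw [hk, Finset.inter_insert_of_notMem hA]
          exact ih
    have huniv : initSeg g (Fintype.card α) = Finset.univ := by
      ext a
      simp [mem_initSeg]
    simpa [huniv] using key _ le_rfl
  · rw [hg, ← Equiv.sum_comp g]
    simp

/-- Abel summation inequality: a nonnegative antitone weight against the increments of a
nonnegative sequence starting at `0`. -/
lemma abel_nonneg (u H : ℕ → ℝ) (hu : ∀ m, 0 ≤ u m) (hanti : ∀ m, u (m + 1) ≤ u m)
    (hH : ∀ m, 0 ≤ H m) (hH0 : H 0 = 0) (n : ℕ) :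
    0 ≤ ∑ k ∈ Finset.range n, u k * (H (k + 1) - H k) := by
  have key : ∀ m, u m * H m ≤ ∑ k ∈ Finset.range m, u k * (H (k + 1) - H k) := by
    intro m
    induction m with
    | zero => simp [hH0]
    | succ m ih =>
      rw [Finset.sum_range_succ]
      have := mul_le_mul_of_nonneg_right (hanti m) (hH (m + 1))
      linarith
  exact (mul_nonneg (hu n) (hH n)).trans (key n)

lemma sum_mul_le_lovasz {α : Type*} [Fintype α] [DecidableEq α] (F : Finset α → ℝ)
    (hF0 : F ∅ = 0) (w t : α → ℝ) (hw : ∀ a, 0 ≤ w a)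
    (ht : ∀ A : Finset α, ∑ a ∈ A, t a ≤ F A) :
    ∑ a, w a * t a ≤ lovasz F w := by
  obtain ⟨g, hanti, hg⟩ := lovasz_eq F w
  -- Extending the sorted weights by `0` keeps them nonnegative and antitone.
  let u : ℕ → ℝ := fun m => if h : m < Fintype.card α then w (g ⟨m, h⟩) else 0
  let H : ℕ → ℝ := fun m => F (initSeg g m) - ∑ a ∈ initSeg g m, t a
  have hu : ∀ m, 0 ≤ u m := by
    intro m
    simp only [u]
    split_ifs
    · exact hw _
    · exact le_rfl
  have hua : ∀ m, u (m + 1) ≤ u m := by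
    intro m
    by_cases h : m + 1 < Fintype.card α
    · have h' : m < Fintype.card α := by omega
      simp only [u, h, h', dif_pos]
      exact hanti _ _ (by simp [Fin.le_def])
    · have : u (m + 1) = 0 := by simp [u, h]
      rw [this]
      exact hu m
  have hH0 : H 0 = 0 := by
    have : initSeg g 0 = ∅ := by
      ext a
      simp [mem_initSeg]
    simp [H, this, hF0]
  have h := abel_nonneg u H hu hua (fun m => sub_nonneg.2 (ht _)) hH0 (Fintype.card α)
  rw [← Fin.sum_univ_eq_sum_range (fun k => u k * (H (k + 1) - H k))] at h
  rw [hg, ← sub_nonneg, ← Equiv.sum_comp g, ← Finset.sum_sub_distrib]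
  refine h.trans_eq (Finset.sum_congr rfl fun k _ => ?_)
  have hk : u k = w (g k) := by simp [u]
  have hnot : g k ∉ initSeg g k := by simp [mem_initSeg]
  have hT : ∑ a ∈ initSeg g (k + 1), t a = t (g k) + ∑ a ∈ initSeg g k, t a := by
    rw [initSeg_succ, Finset.sum_insert hnot]
  simp only [hk, H, hT]
  ring

/-- `Ω(w) = f(|w|)` is a norm on `ℝ^p`: it is nonnegative, positively
homogeneous, satisfies the triangle inequality, and `Ω(w) = 0` implies `w = 0`. -/
theorem omega_is_norm {p : ℕ} (hp : 1 ≤ p) (F : Finset (Fin p) → ℝ)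
    (hsub : Submodular F) (hmono : MonotoneF F) (hF0 : F ∅ = 0)
    (hFpos : ∀ k : Fin p, 0 < F {k}) :
    (∀ w : Fin p → ℝ, 0 ≤ OmegaF F w) ∧
    (∀ (c : ℝ) (w : Fin p → ℝ), 0 ≤ c → OmegaF F (fun i => c * w i) = c * OmegaF F w) ∧
    (∀ v w : Fin p → ℝ, OmegaF F (fun i => v i + w i) ≤ OmegaF F v + OmegaF F w) ∧
    (∀ w : Fin p → ℝ, OmegaF F w = 0 → w = 0) := by
  have hnn : ∀ v : Fin p → ℝ, ∀ a, 0 ≤ |v a| := fun v a => abs_nonneg _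
  refine ⟨?_, ?_, ?_, ?_⟩
  · intro w
    obtain ⟨s, hs, -, h⟩ := exists_greedy F hsub hmono hF0 (fun i => |w i|)
    rw [OmegaF, h]
    exact Finset.sum_nonneg fun a _ => mul_nonneg (abs_nonneg _) (hs a)
  · intro c w hc
    apply le_antisymm
    · obtain ⟨s, -, hsF, h⟩ := exists_greedy F hsub hmono hF0 (fun i => |c * w i|)
      have h' := sum_mul_le_lovasz F hF0 (fun i => |w i|) s (hnn w) hsF
      rw [OmegaF, OmegaF, h]
      refine le_trans (le_of_eq ?_) (mul_le_mul_of_nonneg_left h' hc)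
      rw [Finset.mul_sum]
      refine Finset.sum_congr rfl fun a _ => ?_
      rw [abs_mul, abs_of_nonneg hc, mul_assoc]
    · obtain ⟨s, -, hsF, h⟩ := exists_greedy F hsub hmono hF0 (fun i => |w i|)
      have h' := sum_mul_le_lovasz F hF0 (fun i => |c * w i|) s (fun a => abs_nonneg _) hsF
      rw [OmegaF, OmegaF, h]
      refine le_trans (le_of_eq ?_) h'
      rw [Finset.mul_sum]
      refine Finset.sum_congr rfl fun a _ => ?_
      rw [abs_mul, abs_of_nonneg hc, mul_assoc]
  · intro v w
    obtain ⟨s, hs, hsF, h⟩ := exists_greedy F hsub hmono hF0 (fun i => |v i + w i|)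
    have hv := sum_mul_le_lovasz F hF0 (fun i => |v i|) s (hnn v) hsF
    have hw := sum_mul_le_lovasz F hF0 (fun i => |w i|) s (hnn w) hsF
    rw [OmegaF, OmegaF, OmegaF, h]
    refine le_trans ?_ (add_le_add hv hw)
    rw [← Finset.sum_add_distrib]
    refine Finset.sum_le_sum fun a _ => ?_
    rw [← add_mul]
    exact mul_le_mul_of_nonneg_right (abs_add_le _ _) (hs a)
  · intro w h0
    funext k
    have ht : ∀ A : Finset (Fin p), ∑ a ∈ A, (if a = k then F {k} else 0) ≤ F A := by
      intro A
      rw [Finset.sum_ite_eq']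
      split_ifs with hk
      · exact hmono (Finset.singleton_subset_iff.2 hk)
      · rw [← hF0]
        exact hmono (Finset.empty_subset A)
    have h := sum_mul_le_lovasz F hF0 (fun i => |w i|) _ (hnn w) ht
    rw [OmegaF] at h0
    rw [h0] at h
    simp only [mul_ite, mul_zero, Finset.sum_ite_eq', Finset.mem_univ, if_true] at h
    have h1 : |w k| ≤ 0 := by
      by_contra! hc
      exact absurd h (not_le.2 (mul_pos hc (hFpos k)))
    simpa using h1
end
end

section
/- Ω is the convex envelope of the function g : w ↦ F(Supp(w)) on the unit ℓ∞-ball; precisely, if g(w) = F(Supp(w)) for ‖w‖_∞ ≤ 1 and g(w) = +∞ otherwise, then the Fenchel biconjugate g** satisfies g**(w) = Ω(w) for every w with ‖w‖_∞ ≤ 1. -/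
/-!
Sort the coordinates of `|w|` in decreasing order and let `A 0 ⊆ A 1 ⊆ ⋯` be the chain of sets of
leading coordinates, so that `Ω w = ∑ i, |w i| * t i`, where `t i` is the increment of `F` along
the chain at `i` (`exists_rank_omegaF`).

For `Ω ≤ g**`: the greedy vector `t` is nonnegative as `F` is nondecreasing, and submodularity gives
`∑ i ∈ B, t i ≤ F B` for all `B` (`sum_chainIncr_le`). Hence `s i = sign (w i) * t i` satisfies
`g* s ≤ 0` and `⟨s, w⟩ = Ω w`, so the supremum defining `g** w` is at least `Ω w`.

For `g** ≤ Ω`: the point `w` is a convex combination of the vectors equal to `sign w` on `A k` and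
to `0` elsewhere, with the same coefficients that write `Ω w` as a combination of the `F (A k)`.
Each of these vectors yields a lower bound for `g* s`, and averaging gives `⟨s, w⟩ - Ω w ≤ g* s`.
The averaging is an Abel summation (`sum_mul_chainIncr_le`).
-/

open Finset MeasureTheory
open scoped Classical NNReal

noncomputable section

/-- The Fenchel conjugate of an extended-real-valued function on `ℝ^p`. -/
noncomputable def fenchelConj {p : ℕ} (h : (Fin p → ℝ) → EReal) (s : Fin p → ℝ) : EReal :=
  ⨆ w : Fin p → ℝ, (((∑ i, s i * w i : ℝ) : EReal) - h w)

/-- The set of elements of rank less than `k`, for a ranking `r` of the ground set. -/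
def chain {p : ℕ} (r : Fin p → ℕ) (k : ℕ) : Finset (Fin p) :=
  Finset.univ.filter (fun j => r j < k)

/-- The increment of `F` along the chain of `r` when passing from the elements ranked before `i`
to those ranked up to `i`: the vector produced by the greedy algorithm. -/
def chainIncr {p : ℕ} (F : Finset (Fin p) → ℝ) (r : Fin p → ℕ) (i : Fin p) : ℝ :=
  F (chain r (r i + 1)) - F (chain r (r i))

lemma mem_chain {p : ℕ} {r : Fin p → ℕ} {k : ℕ} {i : Fin p} : i ∈ chain r k ↔ r i < k := by
  simp [chain]

lemma chain_zero {p : ℕ} (r : Fin p → ℕ) : chain r 0 = ∅ := by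
  ext; simp [mem_chain]

lemma chain_succ_of_rank {p : ℕ} {r : Fin p → ℕ} (hr : Function.Injective r) (i : Fin p) :
    chain r (r i + 1) = insert i (chain r (r i)) := by
  ext j
  simp only [mem_chain, Finset.mem_insert, Nat.lt_succ_iff, le_iff_lt_or_eq, hr.eq_iff]
  exact or_comm

lemma chain_succ_of_forall_ne {p : ℕ} {r : Fin p → ℕ} {k : ℕ} (h : ∀ i, r i ≠ k) :
    chain r (k + 1) = chain r k := by
  ext j
  have := h j
  simp only [mem_chain]
  omega

lemma exists_chain_eq_univ {p : ℕ} (r : Fin p → ℕ) : ∃ k, chain r k = Finset.univ := by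
  refine ⟨Finset.univ.sup r + 1, ?_⟩
  ext j
  simp only [mem_chain, Finset.mem_univ, iff_true, Nat.lt_succ_iff]
  exact Finset.le_sup (f := r) (Finset.mem_univ j)

lemma chainIncr_nonneg {p : ℕ} {F : Finset (Fin p) → ℝ} (hmono : MonotoneF F) (r : Fin p → ℕ)
    (i : Fin p) : 0 ≤ chainIncr F r i := by
  refine sub_nonneg.2 (hmono fun j hj => ?_)
  rw [mem_chain] at hj ⊢
  omega

/-- The Lovász extension written as a sum over the ground set, for a ranking of the coordinates of
`|w|` in decreasing order. -/
lemma exists_rank_omegaF {p : ℕ} (F : Finset (Fin p) → ℝ) (w : Fin p → ℝ) :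
    ∃ r : Fin p → ℕ, Function.Injective r ∧ (∀ i j, r i < r j → |w j| ≤ |w i|) ∧
      OmegaF F w = ∑ i, |w i| * chainIncr F r i := by
  set e : Fin (Fintype.card (Fin p)) ≃ Fin p := (Fintype.equivFin (Fin p)).symm with he
  set σ : Equiv.Perm (Fin (Fintype.card (Fin p))) := Tuple.sort (fun i => -|w (e i)|) with hσ
  set π : Fin (Fintype.card (Fin p)) ≃ Fin p := σ.trans e with hπ
  refine ⟨fun i => (π.symm i : ℕ), ?_, ?_, ?_⟩
  · intro i j h
    exact π.symm.injective (Fin.ext h)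
  · intro i j h
    have hm : -|w (π (π.symm i))| ≤ -|w (π (π.symm j))| :=
      Tuple.monotone_sort (fun i => -|w (e i)|) (le_of_lt h)
    simpa using hm
  · rw [← Equiv.sum_comp π (fun i => |w i| * chainIncr F (fun i => (π.symm i : ℕ)) i)]
    unfold OmegaF lovasz
    refine Finset.sum_congr rfl fun k _ => ?_
    have h1 : (Finset.univ.filter (fun j => j ≤ k)).image (fun j => e (σ j))
        = chain (fun i => (π.symm i : ℕ)) ((π.symm (π k) : ℕ) + 1) := by
      ext i
      simp only [Finset.mem_image, Finset.mem_filter, Finset.mem_univ, true_and, mem_chain,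
        Equiv.symm_apply_apply, Nat.lt_succ_iff, Fin.val_fin_le]
      exact ⟨fun ⟨j, hj, h⟩ => by rw [← h]; simpa [hπ] using hj,
        fun h => ⟨π.symm i, h, π.apply_symm_apply i⟩⟩
    have h2 : (Finset.univ.filter (fun j => j < k)).image (fun j => e (σ j))
        = chain (fun i => (π.symm i : ℕ)) (π.symm (π k) : ℕ) := by
      ext i
      simp only [Finset.mem_image, Finset.mem_filter, Finset.mem_univ, true_and, mem_chain,
        Equiv.symm_apply_apply, Fin.val_fin_lt]
      exact ⟨fun ⟨j, hj, h⟩ => by rw [← h]; simpa [hπ] using hj,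
        fun h => ⟨π.symm i, h, π.apply_symm_apply i⟩⟩
    rw [chainIncr, ← h1, ← h2]
    rfl

/-- The greedy vector lies in the submodular polyhedron of `F`. -/
lemma sum_chainIncr_le {p : ℕ} {F : Finset (Fin p) → ℝ} (hsub : Submodular F) (hF0 : F ∅ = 0)
    {r : Fin p → ℕ} (hr : Function.Injective r) (B : Finset (Fin p)) :
    ∑ i ∈ B, chainIncr F r i ≤ F B := by
  have key : ∀ k, ∑ i ∈ B ∩ chain r k, chainIncr F r i ≤ F (B ∩ chain r k) := by
    intro k
    induction k with
    | zero => simp [chain_zero, hF0]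
    | succ k ih =>
      by_cases h : ∃ i, r i = k
      · obtain ⟨i, rfl⟩ := h
        have hi : i ∉ chain r (r i) := by simp [mem_chain]
        by_cases hB : i ∈ B
        · have hins : B ∩ chain r (r i + 1) = insert i (B ∩ chain r (r i)) := by
            rw [chain_succ_of_rank hr, Finset.inter_insert_of_mem hB]
          have hs := hsub (B ∩ chain r (r i + 1)) (chain r (r i))
          have hu : B ∩ chain r (r i + 1) ∪ chain r (r i) = chain r (r i + 1) := by
            rw [hins, chain_succ_of_rank hr]
            ext j
            simp only [Finset.mem_union, Finset.mem_insert, Finset.mem_inter]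
            tauto
          have hn : B ∩ chain r (r i + 1) ∩ chain r (r i) = B ∩ chain r (r i) := by
            rw [chain_succ_of_rank hr]
            ext j
            simp only [Finset.mem_insert, Finset.mem_inter]
            tauto
          rw [hu, hn] at hs
          have hsum : ∑ j ∈ B ∩ chain r (r i + 1), chainIncr F r j
              = chainIncr F r i + ∑ j ∈ B ∩ chain r (r i), chainIncr F r j := by
            rw [hins, Finset.sum_insert (fun h => hi (Finset.mem_inter.1 h).2)]
          rw [hsum, chainIncr]
          linarith
        · rwa [chain_succ_of_rank hr, Finset.inter_insert_of_notMem hB]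
      · push Not at h
        rwa [chain_succ_of_forall_ne h]
  obtain ⟨k, hk⟩ := exists_chain_eq_univ r
  simpa [hk] using key k

/-- Abel summation along the chain. If `∑ i ∈ A, u i - F A ≤ c` for every `A` in the chain, and
`a` takes values in `[0, 1]` and decreases with the rank, then the average of these bounds with
weights the successive differences of `a`, the set `∅` receiving what is left of a total weight of
`1`, is `∑ i, a i * (u i - chainIncr F r i) ≤ c`. -/
lemma sum_mul_chainIncr_le {p : ℕ} {F : Finset (Fin p) → ℝ} (hF0 : F ∅ = 0)
    {r : Fin p → ℕ} (hr : Function.Injective r) {a u : Fin p → ℝ} {c : ℝ}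
    (ha0 : ∀ i, 0 ≤ a i) (ha1 : ∀ i, a i ≤ 1) (har : ∀ i j, r i < r j → a j ≤ a i)
    (hc : ∀ k, ∑ i ∈ chain r k, u i - F (chain r k) ≤ c) :
    ∑ i, a i * (u i - chainIncr F r i) ≤ c := by
  -- `θ` plays the role of the value of `a` at the next coordinate; at the top of the chain it is `0`.
  have key : ∀ k θ, 0 ≤ θ → θ ≤ 1 → (∀ i ∈ chain r k, θ ≤ a i) →
      ∑ i ∈ chain r k, a i * (u i - chainIncr F r i)
        ≤ c - θ * (c - (∑ i ∈ chain r k, u i - F (chain r k))) := by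
    intro k
    induction k with
    | zero =>
      intro θ h0 h1 _
      have := hc 0
      simp only [chain_zero, Finset.sum_empty, hF0] at this ⊢
      nlinarith
    | succ k ih =>
      intro θ h0 h1 hθ
      by_cases h : ∃ i, r i = k
      · obtain ⟨i, rfl⟩ := h
        have hi : i ∉ chain r (r i) := by simp [mem_chain]
        have h2 := ih (a i) (ha0 i) (ha1 i) fun j hj => har j i (mem_chain.1 hj)
        have h3 := hc (r i + 1)
        have h4 : θ ≤ a i := hθ i (by simp [mem_chain])
        have hu : ∑ j ∈ chain r (r i + 1), u j = u i + ∑ j ∈ chain r (r i), u j := by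
          rw [chain_succ_of_rank hr, Finset.sum_insert hi]
        have hs : ∑ j ∈ chain r (r i + 1), a j * (u j - chainIncr F r j)
            = a i * (u i - chainIncr F r i)
              + ∑ j ∈ chain r (r i), a j * (u j - chainIncr F r j) := by
          rw [chain_succ_of_rank hr, Finset.sum_insert hi]
        have h5 := mul_le_mul_of_nonneg_right h4 (sub_nonneg.2 h3)
        rw [hu] at h5
        rw [hs, hu]
        rw [chainIncr]
        linarith
      · push Not at h
        rw [chain_succ_of_forall_ne h] at hθ ⊢
        exact ih θ h0 h1 hθ
  obtain ⟨k, hk⟩ := exists_chain_eq_univ r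
  simpa [hk] using key k 0 le_rfl zero_le_one fun i _ => ha0 i

lemma abs_sign_le_one (x : ℝ) : |Real.sign x| ≤ 1 := by
  rcases Real.sign_apply_eq x with h | h | h <;> simp [h]

lemma abs_mul_realSign (x : ℝ) : |x| * Real.sign x = x := by
  rcases lt_trichotomy x 0 with h | h | h
  · simp [Real.sign_of_neg h, abs_of_neg h]
  · simp [h]
  · simp [Real.sign_of_pos h, abs_of_pos h]

lemma sign_mul_self_eq_abs (x : ℝ) : Real.sign x * x = |x| := by
  rcases lt_trichotomy x 0 with h | h | h
  · simp [Real.sign_of_neg h, abs_of_neg h]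
  · simp [h]
  · simp [Real.sign_of_pos h, abs_of_pos h]

/-- `Ω` is the convex envelope of `g : w ↦ F(Supp w)` on the unit `ℓ∞`-ball:
with `g w = F (Supp w)` if `‖w‖∞ ≤ 1` and `+∞` otherwise, the Fenchel biconjugate `g**`
coincides with `Ω` on the unit `ℓ∞`-ball. -/
theorem omega_convex_envelope {p : ℕ} (hp : 1 ≤ p) (F : Finset (Fin p) → ℝ)
    (hsub : Submodular F) (hmono : MonotoneF F) (hF0 : F ∅ = 0)
    (hFpos : ∀ k : Fin p, 0 < F {k}) :
    ∀ w : Fin p → ℝ, (∀ i, |w i| ≤ 1) →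
      fenchelConj (fenchelConj
          (fun v : Fin p → ℝ => if ∀ i, |v i| ≤ 1 then ((F (suppF v) : ℝ) : EReal) else ⊤)) w
        = ((OmegaF F w : ℝ) : EReal) := by
  intro w hw
  obtain ⟨r, hr, hrw, hΩ⟩ := exists_rank_omegaF F w
  apply le_antisymm
  · refine iSup_le fun s => ?_
    set g : (Fin p → ℝ) → EReal :=
      fun v => if ∀ i, |v i| ≤ 1 then ((F (suppF v) : ℝ) : EReal) else ⊤ with hg
    have hbound : ∀ k, ((∑ i ∈ chain r k, s i * Real.sign (w i) - F (chain r k) : ℝ) : EReal)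
        ≤ fenchelConj g s := by
      intro k
      let v : Fin p → ℝ := fun i => if i ∈ chain r k then Real.sign (w i) else 0
      have hv : ∀ i, |v i| ≤ 1 := by
        intro i
        by_cases h : i ∈ chain r k <;> simp [v, h, abs_sign_le_one]
      -- The inclusion is strict when some coordinate of `w` in the chain vanishes.
      have hsupp : suppF v ⊆ chain r k := by
        intro i hi
        by_contra h
        simp [suppF, v, h] at hi
      have hsum : ∑ i, s i * v i = ∑ i ∈ chain r k, s i * Real.sign (w i) := by
        simp [v, mul_ite, Finset.sum_ite_mem]
      refine le_trans ?_ (le_iSup (fun v => ((∑ i, s i * v i : ℝ) : EReal) - g v) v)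
      simp only [hg, if_pos hv, hsum]
      rw [← EReal.coe_sub, EReal.coe_le_coe_iff]
      linarith [hmono hsupp]
    generalize fenchelConj g s = c at hbound
    induction c using EReal.rec with
    | bot => exact absurd (le_bot_iff.1 (hbound 0)) (EReal.coe_ne_bot _)
    | top => simp
    | coe c =>
      rw [← EReal.coe_sub, EReal.coe_le_coe_iff]
      have h := sum_mul_chainIncr_le hF0 hr (fun i => abs_nonneg (w i)) hw hrw
        (fun k => EReal.coe_le_coe_iff.1 (hbound k))
      have hsw : ∑ i, |w i| * (s i * Real.sign (w i) - chainIncr F r i)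
          = ∑ i, w i * s i - OmegaF F w := by
        rw [hΩ, ← Finset.sum_sub_distrib]
        refine Finset.sum_congr rfl fun i _ => ?_
        linear_combination s i * abs_mul_realSign (w i)
      linarith
  · let s : Fin p → ℝ := fun i => Real.sign (w i) * chainIncr F r i
    refine le_trans ?_ (le_iSup (fun s => ((∑ i, w i * s i : ℝ) : EReal) - fenchelConj _ s) s)
    have hsw : ∑ i, w i * s i = OmegaF F w := by
      rw [hΩ]
      refine Finset.sum_congr rfl fun i _ => ?_
      linear_combination chainIncr F r i * sign_mul_self_eq_abs (w i)
    have hconj : fenchelConj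
        (fun v : Fin p → ℝ => if ∀ i, |v i| ≤ 1 then ((F (suppF v) : ℝ) : EReal) else ⊤) s
          ≤ 0 := by
      refine iSup_le fun v => ?_
      by_cases hv : ∀ i, |v i| ≤ 1
      · simp only [if_pos hv]
        rw [← EReal.coe_sub, ← EReal.coe_zero, EReal.coe_le_coe_iff, sub_nonpos]
        have hsupp : ∑ i ∈ suppF v, s i * v i = ∑ i, s i * v i := by
          refine Finset.sum_subset (Finset.subset_univ _) fun i _ hi => ?_
          have : v i = 0 := by simpa [suppF] using hi
          simp [this]
        rw [← hsupp]
        refine le_trans (Finset.sum_le_sum fun i _ => ?_) (sum_chainIncr_le hsub hF0 hr (suppF v))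
        have ht := chainIncr_nonneg hmono r i
        calc s i * v i ≤ |s i * v i| := le_abs_self _
          _ = (|Real.sign (w i)| * |v i|) * chainIncr F r i := by
            simp only [s, abs_mul, abs_of_nonneg ht]; ring
          _ ≤ 1 * chainIncr F r i := by
            gcongr
            exact mul_le_one₀ (abs_sign_le_one _) (abs_nonneg _) (hv i)
          _ = chainIncr F r i := one_mul _
      · simp [hv]
    simp only [hsw]
    calc ((OmegaF F w : ℝ) : EReal) = (OmegaF F w : ℝ) - 0 := by simp
      _ ≤ _ := EReal.sub_le_sub le_rfl hconj
end
end

section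
/- The dual norm of Ω satisfies, for every s ∈ ℝ^p, Ω*(s) := sup{s^⊤ w : Ω(w) ≤ 1} = max_{∅ ≠ A ⊆ V} ‖s_A‖_1 / F(A) = max_{A ∈ 𝒯} ‖s_A‖_1 / F(A), where 𝒯 is the collection of nonempty stable inseparable subsets of V. -/
/-!
Write `M` for the largest ratio `‖s_A‖₁ / F A` over nonempty `A`; nonempty sets have `F A > 0` by
monotonicity, and the set of candidates is finite.

* `M` bounds the dual norm. The set-function `G A = M * F A - ‖s_A‖₁` is nonnegative and vanishes at
  `∅`. Abel summation along a decreasing ordering shows that its Lovász extension is nonnegative on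
  nonnegative vectors (`lovasz_nonneg`). Since the Lovász extension is linear in the set-function and
  that of a modular function is a dot product, `⟨|s|, |w|⟩ ≤ M * Ω w`.
* Each ratio is attained by a vector in the unit ball, namely the signed indicator of `A` divided by
  `F A`. Here `Ω ≤ 1` follows from submodularity (`lovasz_indicator_le`): with
  `S_k = {j_1, …, j_k}`, a marginal gain `F S_k - F S_{k-1}` with `j_k ∈ A` is at most
  `F (A ∩ S_k) - F (A ∩ S_{k-1})`, and the latter differences telescope to `F A`.
* The maximum is attained on a stable inseparable set (`exists_stable_inseparable_maximizer`). Among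
  the maximizers of the ratio, take one with `F` minimal, and among these one of largest cardinality.
  A strictly larger set with the same value of `F` would be a larger maximizer, and if the set were
  separable, some block of the partition would be a maximizer with a smaller value of `F`.
-/

open Finset MeasureTheory
open scoped Classical NNReal

noncomputable section

/-- The prefix `{j_1, …, j_k}` of an enumeration `j` of `α`. -/
def prefixSet {α : Type*} [DecidableEq α] {n : ℕ} (j : Fin n → α) (k : ℕ) : Finset α :=
  (Finset.univ.filter (fun i : Fin n => i.val < k)).image j

lemma prefixSet_zero {α : Type*} [DecidableEq α] {n : ℕ} (j : Fin n → α) :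
    prefixSet j 0 = ∅ := by
  simp [prefixSet]

lemma prefixSet_self {α : Type*} [Fintype α] [DecidableEq α] {n : ℕ} (j : Fin n ≃ α) :
    prefixSet j n = Finset.univ := by
  ext x
  simp only [prefixSet, Finset.mem_image, Finset.mem_filter, Finset.mem_univ, true_and, iff_true]
  exact ⟨j.symm x, (j.symm x).isLt, by simp⟩

lemma prefixSet_succ {α : Type*} [DecidableEq α] {n : ℕ} (j : Fin n → α) (k : Fin n) :
    prefixSet j (k.val + 1) = insert (j k) (prefixSet j k.val) := by
  ext x
  simp only [prefixSet, Finset.mem_image, Finset.mem_filter, Finset.mem_univ, true_and,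
    Finset.mem_insert]
  constructor
  · rintro ⟨i, hi, rfl⟩
    rcases Nat.lt_succ_iff_lt_or_eq.mp hi with h | h
    · exact Or.inr ⟨i, h, rfl⟩
    · exact Or.inl (congrArg j (Fin.ext h))
  · rintro (rfl | ⟨i, hi, rfl⟩)
    · exact ⟨k, Nat.lt_succ_self _, rfl⟩
    · exact ⟨i, Nat.lt_succ_of_lt hi, rfl⟩

lemma notMem_prefixSet {α : Type*} [DecidableEq α] {n : ℕ} (j : Fin n ≃ α) (k : Fin n) :
    j k ∉ prefixSet j k.val := by
  simp [prefixSet]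

/-- The decreasing ordering depends on `w` only, so a single enumeration serves for all
set-functions. -/
lemma exists_lovasz_order {α : Type*} [Fintype α] [DecidableEq α] (w : α → ℝ) :
    ∃ j : Fin (Fintype.card α) ≃ α, Antitone (fun k => w (j k)) ∧
      ∀ F : Finset α → ℝ, lovasz F w =
        ∑ k, w (j k) * (F (prefixSet j (k.val + 1)) - F (prefixSet j k.val)) := by
  let e : Fin (Fintype.card α) ≃ α := (Fintype.equivFin α).symm
  let σ : Equiv.Perm (Fin (Fintype.card α)) := Tuple.sort (fun i => -(w (e i)))
  refine ⟨σ.trans e, ?_, ?_⟩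
  · intro a b hab
    have h := Tuple.monotone_sort (fun i => -(w (e i))) hab
    simpa using h
  · intro F
    refine Finset.sum_congr rfl fun k _ => ?_
    have h1 : prefixSet (σ.trans e) (k.val + 1) =
        (Finset.univ.filter (fun i => i ≤ k)).image (fun i => e (σ i)) := by
      refine congrArg (Finset.image _) (Finset.filter_congr fun i _ => ?_)
      exact Nat.lt_succ_iff
    have h2 : prefixSet (σ.trans e) k.val =
        (Finset.univ.filter (fun i => i < k)).image (fun i => e (σ i)) := by
      exact congrArg (Finset.image _) (Finset.filter_congr fun i _ => Iff.rfl)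
    rw [h1, h2]
    rfl

lemma abel_lower_bound {n : ℕ} (a : Fin (n + 1) → ℝ) (g : ℕ → ℝ) (ha : Antitone a)
    (h0 : g 0 = 0) (hg : ∀ k, 0 ≤ g k) :
    a (Fin.last n) * g (n + 1) ≤ ∑ k, a k * (g (k.val + 1) - g k.val) := by
  induction n with
  | zero => simp [h0]
  | succ n ih =>
    rw [Fin.sum_univ_castSucc]
    have h := ih (fun k => a k.castSucc) (fun x y hxy => ha (Fin.castSucc_le_castSucc_iff.mpr hxy))
    have hle : a (Fin.last (n + 1)) ≤ a (Fin.last n).castSucc := ha (Fin.le_last _)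
    have hmul := mul_le_mul_of_nonneg_right hle (hg (n + 1))
    simp only [Fin.val_castSucc, Fin.val_last] at h ⊢
    linarith [mul_sub (a (Fin.last (n + 1))) (g (n + 1 + 1)) (g (n + 1))]

/-- Neither submodularity nor monotonicity of `G` is needed here. -/
lemma lovasz_nonneg {α : Type*} [Fintype α] [DecidableEq α] (G : Finset α → ℝ) (w : α → ℝ)
    (hw : ∀ i, 0 ≤ w i) (h0 : G ∅ = 0) (hG : ∀ A, 0 ≤ G A) : 0 ≤ lovasz G w := by
  obtain ⟨j, hj, h⟩ := exists_lovasz_order w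
  rw [h G]
  generalize Fintype.card α = n at j hj
  cases n with
  | zero => simp
  | succ n =>
    exact (mul_nonneg (hw _) (hG _)).trans
      (abel_lower_bound (fun k => w (j k)) (fun k => G (prefixSet j k)) hj
        (by simp [prefixSet_zero, h0]) (fun _ => hG _))

lemma lovasz_const_mul_sub_modular {α : Type*} [Fintype α] [DecidableEq α] (F : Finset α → ℝ)
    (M : ℝ) (t w : α → ℝ) :
    lovasz (fun A => M * F A - ∑ k ∈ A, t k) w = M * lovasz F w - ∑ i, t i * w i := by
  obtain ⟨j, -, h⟩ := exists_lovasz_order w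
  rw [h, h, Finset.mul_sum, ← Equiv.sum_comp j, ← Finset.sum_sub_distrib]
  refine Finset.sum_congr rfl fun k _ => ?_
  rw [prefixSet_succ, Finset.sum_insert (notMem_prefixSet j k)]
  ring

/-- Equality holds in fact, but the upper bound needs only submodularity and no information on how
the ordering breaks ties. -/
lemma lovasz_indicator_le {α : Type*} [Fintype α] [DecidableEq α] (F : Finset α → ℝ)
    (hsub : Submodular F) (hF0 : F ∅ = 0) (A : Finset α) (c : ℝ) (hc : 0 ≤ c) :
    lovasz F (fun i => if i ∈ A then c else 0) ≤ c * F A := by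
  obtain ⟨j, -, h⟩ := exists_lovasz_order (fun i => if i ∈ A then c else 0)
  rw [h F]
  have htel : ∑ k : Fin (Fintype.card α),
      c * (F (A ∩ prefixSet j (k.val + 1)) - F (A ∩ prefixSet j k.val)) = c * F A := by
    rw [← Finset.mul_sum,
      Fin.sum_univ_eq_sum_range
        (fun k => F (A ∩ prefixSet j (k + 1)) - F (A ∩ prefixSet j k)),
      Finset.sum_range_sub (fun k => F (A ∩ prefixSet j k)), prefixSet_self, prefixSet_zero]
    simp [hF0]
  rw [← htel]
  refine Finset.sum_le_sum fun k _ => ?_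
  rw [prefixSet_succ]
  by_cases hk : j k ∈ A
  · rw [if_pos hk]
    refine mul_le_mul_of_nonneg_left ?_ hc
    have hs := hsub (prefixSet j k.val) (A ∩ insert (j k) (prefixSet j k.val))
    have h1 : prefixSet j k.val ∪ (A ∩ insert (j k) (prefixSet j k.val)) =
        insert (j k) (prefixSet j k.val) := by
      ext x; simp only [Finset.mem_union, Finset.mem_inter, Finset.mem_insert]
      constructor
      · tauto
      · rintro (rfl | hx) <;> tauto
    have h2 : prefixSet j k.val ∩ (A ∩ insert (j k) (prefixSet j k.val)) =
        A ∩ prefixSet j k.val := by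
      ext x; simp only [Finset.mem_inter, Finset.mem_insert]; tauto
    rw [h1, h2] at hs
    linarith
  · rw [if_neg hk, Finset.inter_insert_of_notMem hk]
    simp

/-- Positivity of `F` on nonempty sets suffices: minimizing `F` among the maximizers of the ratio
excludes separability, and then maximizing the cardinality gives stability. -/
lemma exists_stable_inseparable_maximizer {α : Type*} [Fintype α] [Nonempty α] [DecidableEq α]
    (F : Finset α → ℝ) (hpos : ∀ A : Finset α, A.Nonempty → 0 < F A)
    (t : α → ℝ) (ht : ∀ i, 0 ≤ t i) :
    ∃ A : Finset α, A.Nonempty ∧ StableSet F A ∧ ¬ SeparableSet F A ∧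
      ∀ B : Finset α, B.Nonempty → (∑ k ∈ B, t k) / F B ≤ (∑ k ∈ A, t k) / F A := by
  let r : Finset α → ℝ := fun A => (∑ k ∈ A, t k) / F A
  let S : Finset (Finset α) := Finset.univ.filter (fun A => A.Nonempty)
  have hS : S.Nonempty := ⟨Finset.univ, by simp [S]⟩
  obtain ⟨A₀, hA₀, hmax⟩ := Finset.exists_max_image S r hS
  obtain ⟨A₁, hA₁, hmin⟩ := Finset.exists_min_image (S.filter (fun A => r A₀ ≤ r A)) F
    ⟨A₀, by simp [hA₀]⟩
  obtain ⟨A, hA, hcard⟩ := Finset.exists_max_image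
    (S.filter (fun A => r A₀ ≤ r A ∧ F A ≤ F A₁)) Finset.card
    ⟨A₁, by simp only [Finset.mem_filter] at hA₁ ⊢; exact ⟨hA₁.1, hA₁.2, le_rfl⟩⟩
  simp only [S, Finset.mem_filter, Finset.mem_univ, true_and] at hmax hmin hA hcard
  obtain ⟨hne, hr, hF⟩ := hA
  refine ⟨A, hne, ?_, ?_, fun B hB => (hmax B hB).trans hr⟩
  · intro B hAB hneq
    by_contra! hle
    have hBne := hne.mono hAB
    have hrB : r A ≤ r B :=
      div_le_div₀ (Finset.sum_nonneg fun i _ => ht i)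
        (Finset.sum_le_sum_of_subset_of_nonneg hAB fun i _ _ => ht i) (hpos B hBne) hle
    have := hcard B ⟨hBne, hr.trans hrB, hle.trans hF⟩
    exact hneq (Finset.eq_of_subset_of_card_le hAB this)
  · rintro ⟨P, hP, hPne, hdisj, hU, hsum⟩
    -- `r A * F A` is the sum of the `r B * F B` over the blocks, and the `F B` sum to `F A`,
    -- so some block has ratio `≥ r A`.
    obtain ⟨B, hB, hrB⟩ : ∃ B ∈ P, r A * F B ≤ ∑ k ∈ B, t k := by
      apply Finset.exists_le_of_sum_le
      · exact Finset.card_pos.mp (by omega)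
      · have h1 : ∑ B ∈ P, ∑ k ∈ B, t k = ∑ k ∈ A, t k := by
          rw [← hU, Finset.sum_biUnion hdisj]; rfl
        rw [← Finset.mul_sum, ← hsum, h1]
        exact (div_mul_cancel₀ _ (hpos A hne).ne').le
    have hBne := hPne B hB
    have hratio : r A ≤ r B := (le_div_iff₀ (hpos B hBne)).mpr hrB
    obtain ⟨C, hC, hCB⟩ := Finset.exists_mem_ne (by omega : 1 < P.card) B
    have hlt : F B < F A := by
      rw [hsum]
      exact Finset.single_lt_sum hCB hB hC (hpos C (hPne C hC))
        fun D hD _ => (hpos D (hPne D hD)).le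
    linarith [hmin B ⟨hBne, hr.trans hratio⟩]


/-- the dual norm of `Ω` is `Ω*(s) = max_{A ≠ ∅} ‖s_A‖₁ / F(A)`, and the
maximum may be restricted to the collection `𝒯` of nonempty stable inseparable sets. -/
theorem omega_dual_norm {p : ℕ} (hp : 1 ≤ p) (F : Finset (Fin p) → ℝ)
    (hsub : Submodular F) (hmono : MonotoneF F) (hF0 : F ∅ = 0)
    (hFpos : ∀ k : Fin p, 0 < F {k}) (s : Fin p → ℝ) :
    dualNorm (OmegaF F) s =
      sSup {x : ℝ | ∃ A : Finset (Fin p), A.Nonempty ∧ x = (∑ k ∈ A, |s k|) / F A} ∧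
    dualNorm (OmegaF F) s =
      sSup {x : ℝ | ∃ A : Finset (Fin p), A.Nonempty ∧ StableSet F A ∧ ¬ SeparableSet F A ∧
        x = (∑ k ∈ A, |s k|) / F A} := by
  have hpos : ∀ A : Finset (Fin p), A.Nonempty → 0 < F A := fun A ⟨k, hk⟩ =>
    (hFpos k).trans_le (hmono (Finset.singleton_subset_iff.mpr hk))
  have : Nonempty (Fin p) := ⟨⟨0, hp⟩⟩
  obtain ⟨A, hne, hst, hin, hmax⟩ :=
    exists_stable_inseparable_maximizer F hpos (fun k => |s k|) (fun k => abs_nonneg _)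
  set M := (∑ k ∈ A, |s k|) / F A with hM
  have hM0 : 0 ≤ M := div_nonneg (Finset.sum_nonneg fun i _ => abs_nonneg _) (hpos A hne).le
  have hdual : dualNorm (OmegaF F) s = M := by
    refine IsGreatest.csSup_eq ⟨?_, ?_⟩
    · -- `SignType.sign` would vanish where `s` does, making `|w|` differ from the indicator of `A`.
      refine ⟨fun i => if i ∈ A then (if 0 ≤ s i then 1 else -1) * (F A)⁻¹ else 0, ?_, ?_⟩
      · have habs : (fun i => |if i ∈ A then (if 0 ≤ s i then (1 : ℝ) else -1) * (F A)⁻¹ else 0|) =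
            fun i => if i ∈ A then (F A)⁻¹ else 0 := by
          funext i
          split_ifs <;> simp [abs_of_pos (hpos A hne)]
        have h := lovasz_indicator_le F hsub hF0 A (F A)⁻¹ (inv_nonneg.mpr (hpos A hne).le)
        rw [inv_mul_cancel₀ (hpos A hne).ne'] at h
        rw [OmegaF, habs]
        exact h
      · rw [hM, div_eq_mul_inv, Finset.sum_mul]
        simp only [mul_ite, mul_zero, Finset.sum_ite_mem, Finset.univ_inter]
        refine Finset.sum_congr rfl fun i _ => ?_
        split_ifs with hi
        · rw [abs_of_nonneg hi]; ring
        · rw [abs_of_neg (not_le.mp hi)]; ring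
    · rintro x ⟨w, hw, rfl⟩
      have h := lovasz_nonneg (fun B => M * F B - ∑ k ∈ B, |s k|) (fun i => |w i|)
        (fun i => abs_nonneg _) (by simp [hF0]) (fun B => by
          rcases B.eq_empty_or_nonempty with rfl | hB
          · simp [hF0]
          · exact sub_nonneg.mpr ((div_le_iff₀ (hpos B hB)).mp (hmax B hB)))
      rw [lovasz_const_mul_sub_modular] at h
      calc ∑ i, s i * w i ≤ ∑ i, |s i| * |w i| :=
            Finset.sum_le_sum fun i _ => (le_abs_self _).trans (abs_mul _ _).le
        _ ≤ M * OmegaF F w := sub_nonneg.mp h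
        _ ≤ M := mul_le_of_le_one_right hM0 hw
  rw [hdual]
  constructor
  · refine Eq.symm (IsGreatest.csSup_eq ⟨⟨A, hne, hM⟩, ?_⟩)
    rintro x ⟨B, hB, rfl⟩
    exact hmax B hB
  · refine Eq.symm (IsGreatest.csSup_eq ⟨⟨A, hne, hst, hin, hM⟩, ?_⟩)
    rintro x ⟨B, hB, -, -, rfl⟩
    exact hmax B hB
end
end

section
/- For every J ⊆ V and every w ∈ ℝ^p, Ω(w) ≥ Ω_J(w_J) + Ω^J(w_{J^c}), where Ω_J is the norm on ℝ^J associated with the restriction F_J and Ω^J is the function on ℝ^{J^c} associated with the contraction F^J. -/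
/-!
The Lovász extension of `F` at `w ≥ 0` has the layer-cake form
`f(w) = ∫₀^∞ (F {i | t < w i} - F ∅) dt` (`lovasz_eq_integral`): each coefficient `w_{j_k}` is the
integral of the indicator of `[0, w_{j_k})`, and at a fixed level `t` the remaining sum of increments
telescopes, since `{i | t < w i}` is an initial segment of the decreasing ordering
(`sum_increments_superlevel`). With `A = {i | t < |w i|}`, the integrands for `F_J` and `F^J` are
`F (A ∩ J) - F ∅` and `F (A ∪ J) - F J`, whose sum is at most the integrand `F A - F ∅` for `F`
by submodularity. Integrating this pointwise inequality over `t` gives the claim.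
-/

open Finset MeasureTheory
open scoped Classical NNReal

noncomputable section

/-- Along an ordering `e` for which `w` is decreasing, the increments of `F` at the elements above
level `t` sum to the value of `F` on the superlevel set. -/
lemma sum_increments_superlevel {α : Type*} [Fintype α] [DecidableEq α] {n : ℕ}
    (F : Finset α → ℝ) (w : α → ℝ) (e : Fin n ≃ α) (h : Antitone fun k => w (e k)) (t : ℝ) :
    (∑ k : Fin n, if t < w (e k) then
      (F ((univ.filter (fun j => j ≤ k)).image e) - F ((univ.filter (fun j => j < k)).image e))
      else 0) = F (univ.filter fun i => t < w i) - F ∅ := by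
  -- `T m` is the part of the superlevel set among the first `m` elements of the ordering.
  let T : ℕ → Finset α := fun m => univ.filter fun i => (e.symm i).val < m ∧ t < w i
  have hT : ∀ k : Fin n, (if t < w (e k) then
      (F ((univ.filter (fun j => j ≤ k)).image e) - F ((univ.filter (fun j => j < k)).image e))
      else 0) = F (T (k.val + 1)) - F (T k.val) := by
    intro k
    split_ifs with hk
    · congr 2
      · ext i
        obtain ⟨j, rfl⟩ := e.surjective i
        simp only [T, mem_image, mem_filter, mem_univ, true_and, EmbeddingLike.apply_eq_iff_eq,
          exists_eq_right, Equiv.symm_apply_apply, Nat.lt_succ_iff, Fin.val_fin_le]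
        exact ⟨fun hj => ⟨hj, hk.trans_le (h hj)⟩, fun hj => hj.1⟩
      · ext i
        obtain ⟨j, rfl⟩ := e.surjective i
        simp only [T, mem_image, mem_filter, mem_univ, true_and, EmbeddingLike.apply_eq_iff_eq,
          exists_eq_right, Equiv.symm_apply_apply, Fin.val_fin_lt]
        exact ⟨fun hj => ⟨hj, hk.trans_le (h hj.le)⟩, fun hj => hj.1⟩
    · have : T (k.val + 1) = T k.val := by
        ext i
        obtain ⟨j, rfl⟩ := e.surjective i
        simp only [T, mem_filter, mem_univ, true_and, Equiv.symm_apply_apply]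
        refine ⟨fun ⟨h1, h2⟩ => ⟨?_, h2⟩, fun ⟨h1, h2⟩ => ⟨by omega, h2⟩⟩
        have : j ≠ k := by rintro rfl; exact hk h2
        have := Fin.val_ne_of_ne this
        omega
      rw [this, sub_self]
  rw [Finset.sum_congr rfl fun k _ => hT k,
    Fin.sum_univ_eq_sum_range (fun m => F (T (m + 1)) - F (T m)) n,
    Finset.sum_range_sub (fun m => F (T m))]
  congr 2
  · simp [T]
  · simp [T]

/-- Layer-cake formula for the Lovász extension, with integrability of the integrand. The set-function
need not vanish at `∅`, and the integrand is cut off by an indicator so as to live on `ℝ`. -/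
lemma lovasz_eq_integral {α : Type*} [Fintype α] [DecidableEq α]
    (F : Finset α → ℝ) (w : α → ℝ) (hw : ∀ i, 0 ≤ w i) :
    Integrable (fun t : ℝ => if 0 ≤ t then F (univ.filter fun i => t < w i) - F ∅ else 0) ∧
    lovasz F w =
      ∫ t : ℝ, (if 0 ≤ t then F (univ.filter fun i => t < w i) - F ∅ else 0) := by
  set e : Fin (Fintype.card α) ≃ α := (Fintype.equivFin α).symm with he
  set σ : Equiv.Perm (Fin (Fintype.card α)) := Tuple.sort (fun i => -(w (e i))) with hσ
  let c : Fin (Fintype.card α) → ℝ := fun k =>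
    F ((univ.filter (fun j => j ≤ k)).image (σ.trans e)) -
      F ((univ.filter (fun j => j < k)).image (σ.trans e))
  have hanti : Antitone fun k => w ((σ.trans e) k) := by
    intro a b hab
    have := Tuple.monotone_sort (fun i => -(w (e i))) hab
    simpa using this
  have hfun : (fun t : ℝ => if 0 ≤ t then F (univ.filter fun i => t < w i) - F ∅ else 0) =
      fun t => ∑ k, (Set.Ico 0 (w (e (σ k)))).indicator (fun _ => c k) t := by
    funext t
    split_ifs with ht
    · rw [← sum_increments_superlevel F w (σ.trans e) hanti t]
      refine Finset.sum_congr rfl fun k _ => ?_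
      simp only [Set.indicator_apply, Set.mem_Ico, ht, true_and, c, Equiv.trans_apply]
      congr!
    · simp [ht]
  have hint : ∀ k, Integrable ((Set.Ico 0 (w (e (σ k)))).indicator (fun _ => c k)) := by
    intro k
    rw [integrable_indicator_iff measurableSet_Ico]
    exact integrableOn_const (by simp)
  rw [hfun]
  refine ⟨integrable_finsetSum _ fun k _ => hint k, ?_⟩
  rw [integral_finsetSum _ fun k _ => hint k]
  change ∑ k, w (e (σ k)) * c k = _
  refine Finset.sum_congr rfl fun k _ => ?_
  rw [integral_indicator_const _ measurableSet_Ico]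
  simp [Measure.real, hw]

/-- decomposition, lower bound: for every `J ⊆ V` and `w ∈ ℝ^p`,
`Ω(w) ≥ Ω_J(w_J) + Ω^J(w_{Jᶜ})`. -/
theorem omega_decomposition_ge {p : ℕ} (hp : 1 ≤ p) (F : Finset (Fin p) → ℝ)
    (hsub : Submodular F) (hmono : MonotoneF F) (hF0 : F ∅ = 0)
    (hFpos : ∀ k : Fin p, 0 < F {k})
    (J : Finset (Fin p)) (w : Fin p → ℝ) :
    OmegaF (Frestrict F J) (fun j : {x : Fin p // x ∈ J} => w j.1) +
      OmegaF (Fcontract F J) (fun j : {x : Fin p // x ∈ Jᶜ} => w j.1) ≤ OmegaF F w := by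
  obtain ⟨i1, e1⟩ := lovasz_eq_integral (Frestrict F J)
    (fun j : {x : Fin p // x ∈ J} => |w j.1|) (fun _ => abs_nonneg _)
  obtain ⟨i2, e2⟩ := lovasz_eq_integral (Fcontract F J)
    (fun j : {x : Fin p // x ∈ Jᶜ} => |w j.1|) (fun _ => abs_nonneg _)
  obtain ⟨i3, e3⟩ := lovasz_eq_integral F (fun j => |w j|) (fun _ => abs_nonneg _)
  unfold OmegaF
  rw [e1, e2, e3, ← integral_add i1 i2]
  refine integral_mono (i1.add i2) i3 fun t => ?_
  dsimp only
  split_ifs with ht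
  · set A : Finset (Fin p) := univ.filter fun i => t < |w i| with hA
    have h1 : (univ.filter fun j : {x : Fin p // x ∈ J} => t < |w j.1|).image Subtype.val
        = A ∩ J := by
      ext i; simp [hA]
    have h2 : (univ.filter fun j : {x : Fin p // x ∈ Jᶜ} => t < |w j.1|).image Subtype.val ∪ J
        = A ∪ J := by
      ext i
      by_cases hi : i ∈ J <;> simp [hA, hi]
    have h := hsub A J
    simp only [Frestrict, Fcontract, image_empty, empty_union]
    rw [← h1, ← h2] at h
    linarith
  · simp
end
end

section
/- For every J ⊆ V and every w ∈ ℝ^p, if min_{j∈J} |w_j| ≥ max_{j∈J^c} |w_j|, then Ω(w) = Ω_J(w_J) + Ω^J(w_{J^c}). -/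
/-!
The Lovász extension of `G` with `G ∅ = 0` is, on nonnegative vectors, the integral of `G` over the
strict superlevel sets: `f(w) = ∫₀ᴹ G {i | t < w i} dt` for every `M ≥ max w`
(`lovasz_eq_integral`). This follows by integrating a pointwise telescoping identity
(`sum_telescope_superlevel`), and it removes all reference to the chosen ordering.

Let `A = {i | t < |w i|}`. The restriction contributes `F (A ∩ J)` and the contraction
`F (A ∪ J) - F J`. Under the hypothesis on `w`, each `A` satisfies `A ⊆ J` or `J ⊆ A`, and in both
cases `F (A ∩ J) + (F (A ∪ J) - F J) = F A`, so the two integrands add up to the third.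
-/

open Finset MeasureTheory
open scoped Classical NNReal

noncomputable section

/-- For an enumeration `τ` along which `w` is nonincreasing, the marginal gains of `G` over the
indices with `t < w` telescope to the value of `G` on the superlevel set. -/
lemma sum_telescope_superlevel {α : Type*} [Fintype α] [DecidableEq α] (G : Finset α → ℝ)
    (hG : G ∅ = 0) (w : α → ℝ) {n : ℕ} (τ : Fin n ≃ α) (hτ : Antitone (fun k => w (τ k))) (t : ℝ) :
    ∑ k : Fin n, (if t < w (τ k) then
      (G ((Finset.univ.filter (fun j => j ≤ k)).image (fun j => τ j)) -
       G ((Finset.univ.filter (fun j => j < k)).image (fun j => τ j))) else 0)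
      = G (Finset.univ.filter (fun i => t < w i)) := by
  let K : ℕ → ℝ := fun m =>
    G ((Finset.univ.filter (fun j : Fin n => j.val < m ∧ t < w (τ j))).image (fun j => τ j))
  have h1 : ∀ k : Fin n, (if t < w (τ k) then
      (G ((Finset.univ.filter (fun j => j ≤ k)).image (fun j => τ j)) -
       G ((Finset.univ.filter (fun j => j < k)).image (fun j => τ j))) else 0)
      = K (k.val + 1) - K k.val := by
    intro k
    split_ifs with h
    -- below `k` the condition `t < w` is automatic, since `w ∘ τ` is nonincreasing
    · have hle : ∀ j, j ≤ k → t < w (τ j) := fun j hj => lt_of_lt_of_le h (hτ hj)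
      have e1 : (Finset.univ.filter (fun j : Fin n => j.val < k.val + 1 ∧ t < w (τ j)))
          = Finset.univ.filter (fun j => j ≤ k) := by
        ext j
        simp only [Finset.mem_filter, Finset.mem_univ, true_and, Nat.lt_succ_iff, Fin.val_fin_le]
        exact ⟨fun h => h.1, fun h => ⟨h, hle j h⟩⟩
      have e2 : (Finset.univ.filter (fun j : Fin n => j.val < k.val ∧ t < w (τ j)))
          = Finset.univ.filter (fun j => j < k) := by
        ext j
        simp only [Finset.mem_filter, Finset.mem_univ, true_and, Fin.val_fin_lt]
        exact ⟨fun h => h.1, fun h => ⟨h, hle j h.le⟩⟩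
      simp only [K, e1, e2]
    · have e : (Finset.univ.filter (fun j : Fin n => j.val < k.val + 1 ∧ t < w (τ j)))
          = (Finset.univ.filter (fun j : Fin n => j.val < k.val ∧ t < w (τ j))) := by
        ext j
        simp only [Finset.mem_filter, Finset.mem_univ, true_and]
        constructor
        · rintro ⟨h1, h2⟩
          refine ⟨lt_of_le_of_ne (Nat.lt_succ_iff.mp h1) ?_, h2⟩
          intro he
          exact h ((Fin.ext he : j = k) ▸ h2)
        · rintro ⟨h1, h2⟩
          exact ⟨by omega, h2⟩
      simp only [K, e, sub_self]
  rw [Finset.sum_congr rfl (fun k _ => h1 k),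
    Fin.sum_univ_eq_sum_range (fun m => K (m + 1) - K m) n, Finset.sum_range_sub]
  have h0 : K 0 = 0 := by simp [K, hG]
  have hn : K n = G (Finset.univ.filter (fun i => t < w i)) := by
    simp only [K]
    congr 1
    ext i
    simp only [Finset.mem_image, Finset.mem_filter, Finset.mem_univ, true_and]
    constructor
    · rintro ⟨j, ⟨_, h⟩, rfl⟩
      exact h
    · intro h
      exact ⟨τ.symm i, ⟨(τ.symm i).2, by simpa using h⟩, by simp⟩
  rw [h0, hn, sub_zero]

lemma integrable_step (M a c : ℝ) :
    IntervalIntegrable (fun t => if t < a then c else 0) volume 0 M := by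
  have : (fun t : ℝ => if t < a then c else 0) = (Set.Iio a).indicator (fun _ => c) := by
    ext t
    simp [Set.indicator]
  rw [this, intervalIntegrable_iff]
  exact (integrableOn_const (by simp)).indicator measurableSet_Iio

lemma integral_step {M a : ℝ} (c : ℝ) (h0 : 0 ≤ a) (hM : a ≤ M) :
    ∫ t in (0 : ℝ)..M, (if t < a then c else 0) = a * c := by
  rw [← intervalIntegral.integral_add_adjacent_intervals (integrable_step a a c) (b := a)
    ((integrable_step a a c).symm.trans (integrable_step M a c))]
  have h1 : ∫ t in (0 : ℝ)..a, (if t < a then c else 0) = ∫ t in (0 : ℝ)..a, c := by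
    refine intervalIntegral.integral_congr_ae ?_
    -- the two integrands differ only at the endpoint `t = a`
    have hne : ∀ᵐ t : ℝ, t ≠ a := by simp [ae_iff, measure_singleton]
    filter_upwards [hne] with t ht hmem
    rw [Set.uIoc_of_le h0] at hmem
    rw [if_pos (lt_of_le_of_ne hmem.2 ht)]
  have h2 : ∫ t in a..M, (if t < a then c else 0) = ∫ t in a..M, (0 : ℝ) := by
    refine intervalIntegral.integral_congr ?_
    intro t ht
    rw [Set.uIcc_of_le hM] at ht
    exact if_neg (not_lt.mpr ht.1)
  rw [h1, h2]
  simp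

/-- The Lovász extension as an integral over superlevel sets. Integrability is included since
it is needed to add such integrals. -/
lemma lovasz_eq_integral_s6 {α : Type*} [Fintype α] [DecidableEq α] (G : Finset α → ℝ)
    (hG : G ∅ = 0) (w : α → ℝ) (M : ℝ) (h0 : ∀ i, 0 ≤ w i) (hM : ∀ i, w i ≤ M) :
    IntervalIntegrable (fun t => G (Finset.univ.filter (fun i => t < w i))) volume 0 M ∧
    lovasz G w = ∫ t in (0 : ℝ)..M, G (Finset.univ.filter (fun i => t < w i)) := by
  let e : Fin (Fintype.card α) ≃ α := (Fintype.equivFin α).symm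
  let σ : Equiv.Perm (Fin (Fintype.card α)) := Tuple.sort (fun i => -(w (e i)))
  let τ : Fin (Fintype.card α) ≃ α := σ.trans e
  have hτ : Antitone (fun k => w (τ k)) := by
    intro a b hab
    have := Tuple.monotone_sort (fun i => -(w (e i))) hab
    exact neg_le_neg_iff.mp this
  have key := fun t => sum_telescope_superlevel G hG w τ hτ t
  simp only [← key]
  constructor
  · have := IntervalIntegrable.sum (μ := volume) (a := 0) (b := M) Finset.univ
      (f := fun (k : Fin (Fintype.card α)) (t : ℝ) => if t < w (τ k) then
      (G ((Finset.univ.filter (fun j => j ≤ k)).image (fun j => τ j)) -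
       G ((Finset.univ.filter (fun j => j < k)).image (fun j => τ j))) else 0)
      (fun k _ => integrable_step M _ _)
    simpa only [Finset.sum_fn] using this
  · rw [intervalIntegral.integral_finsetSum (fun k _ => integrable_step M _ _)]
    refine Finset.sum_congr rfl (fun k _ => ?_)
    rw [integral_step _ (h0 _) (hM _)]
    rfl

/-- decomposition, equality case: if `min_{j ∈ J} |w_j| ≥ max_{j ∈ Jᶜ} |w_j|`,
then `Ω(w) = Ω_J(w_J) + Ω^J(w_{Jᶜ})`. -/
theorem omega_decomposition_eq {p : ℕ} (hp : 1 ≤ p) (F : Finset (Fin p) → ℝ)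
    (hsub : Submodular F) (hmono : MonotoneF F) (hF0 : F ∅ = 0)
    (hFpos : ∀ k : Fin p, 0 < F {k})
    (J : Finset (Fin p)) (w : Fin p → ℝ)
    (hcmp : ∀ i ∈ J, ∀ j : Fin p, j ∉ J → |w j| ≤ |w i|) :
    OmegaF (Frestrict F J) (fun j : {x : Fin p // x ∈ J} => w j.1) +
      OmegaF (Fcontract F J) (fun j : {x : Fin p // x ∈ Jᶜ} => w j.1) = OmegaF F w := by
  obtain ⟨M, hM⟩ : ∃ M, ∀ i, |w i| ≤ M :=
    ⟨∑ i, |w i|, fun i =>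
      Finset.single_le_sum (f := fun i => |w i|) (fun i _ => abs_nonneg _) (Finset.mem_univ i)⟩
  obtain ⟨i1, e1⟩ := lovasz_eq_integral_s6 (Frestrict F J) (by simp [Frestrict, hF0])
    (fun j => |w j.1|) M (fun _ => abs_nonneg _) (fun j => hM j.1)
  obtain ⟨i2, e2⟩ := lovasz_eq_integral_s6 (Fcontract F J) (by simp [Fcontract])
    (fun j => |w j.1|) M (fun _ => abs_nonneg _) (fun j => hM j.1)
  obtain ⟨-, e3⟩ := lovasz_eq_integral_s6 F hF0 (fun j => |w j|) M (fun _ => abs_nonneg _) hM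
  unfold OmegaF
  rw [e3, e1, e2, ← intervalIntegral.integral_add i1 i2]
  congr 1
  ext t
  set A : Finset (Fin p) := Finset.univ.filter (fun i => t < |w i|) with hA
  have hr : Frestrict F J (Finset.univ.filter (fun j => t < |w j.1|)) = F (A ∩ J) := by
    unfold Frestrict
    congr 1
    ext i
    simp [hA, and_comm]
  have hc : Fcontract F J (Finset.univ.filter (fun j => t < |w j.1|)) = F (A ∪ J) - F J := by
    unfold Fcontract
    congr 2
    ext i
    by_cases hi : i ∈ J <;> simp [hA, hi]
  rw [hr, hc]
  have hnest : A ⊆ J ∨ J ⊆ A := by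
    by_contra! h
    obtain ⟨j, hjA, hjJ⟩ := Finset.not_subset.mp h.1
    obtain ⟨i, hiJ, hiA⟩ := Finset.not_subset.mp h.2
    simp only [hA, Finset.mem_filter, Finset.mem_univ, true_and] at hjA hiA
    exact hiA (hjA.trans_le (hcmp i hiJ j hjJ))
  rcases hnest with h | h
  · rw [Finset.inter_eq_left.mpr h, Finset.union_eq_right.mpr h]
    ring
  · rw [Finset.inter_eq_right.mpr h, Finset.union_eq_left.mpr h]
    ring
end
end

section
/- Let X ∈ ℝ^{n×p} with X^⊤X invertible and λ > 0, and let y be an ℝ^n-valued random vector whose law is absolutely continuous with respect to Lebesgue measure on ℝ^n. Then for every value of y the minimizer ŵ(y) of w ↦ (1/(2n))‖y − Xw‖_2² + λΩ(w) is unique, and with probability one the support Supp(ŵ(y)) is a stable set. -/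
/-!
`Ω` is a maximum of finitely many linear forms. For an ordering `τ` of the ground set the greedy
vector `greedy F τ` (the successive increments of `F` along `τ`) lies in the polymatroid
`{s : ∑_{i ∈ B} s i ≤ F B for all B}` by submodularity, while a layer-cake argument shows that every
point `s` of the polymatroid has `⟨s, w⟩ ≤ f(w)` for `w ≥ 0`. Hence `Ω(w)` is the maximum of
`⟨γ, w⟩` over the finite family `signedGreedy F` of greedy vectors with signs. This gives convexity
and continuity of `Ω`; with `Ω(w) ≥ F {k} |w k|` the objective is coercive, so a minimizer exists,
and it is unique because `X` is injective.

For stability, let `ŵ` be a minimizer with support `A`, and let `T` be the set of forms `γ`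
attaining `Ω(ŵ)`. If `A` is not stable, some `k ∉ A` has `F (A ∪ {k}) = F A`. The layer-cake bound
shows that each `γ ∈ T` satisfies `∑_{i ∈ A} |γ i| = F A`, so `γ k = 0`. Let `U` be the space of
directions on which all forms of `T` agree; it contains `ŵ` and `e_k`. Since `Ω` is linear near `ŵ`
along `U`, the first-order condition reads `⟨X u, y - X ŵ⟩ = n λ γ(u)` for `u ∈ U`, where `γ` is any
form of `T`. Choose `v ∈ U` nonzero with `X v` orthogonal to `X (U ∩ {u | u k = 0})`, a space which
contains `X ŵ`. Then `⟨X v, y⟩ = n λ γ(v)`, which puts `y` on a hyperplane depending on `T` and `k`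
only. These finitely many hyperplanes are Lebesgue-null.
-/

open Finset MeasureTheory
open scoped Classical NNReal

noncomputable section

open Matrix Filter Topology

/-! ### Greedy vectors and the Lovász extension -/

section Greedy

variable {α : Type*} [Fintype α] [DecidableEq α]

/-- The greedy vector of `F` along the ordering `τ`: its coordinate at `i` is the increment of `F`
when `i` is added to the set of its strict predecessors. -/
def greedy (F : Finset α → ℝ) {q : ℕ} (τ : α ≃ Fin q) (i : α) : ℝ :=
  F (univ.filter fun j => τ j ≤ τ i) - F (univ.filter fun j => τ j < τ i)

/-- The greedy vector lies in the polymatroid of `F`. -/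
lemma greedy_sum_le {F : Finset α → ℝ} (hsub : Submodular F) (hF0 : F ∅ = 0) {q : ℕ}
    (τ : α ≃ Fin q) (B : Finset α) : ∑ i ∈ B, greedy F τ i ≤ F B := by
  induction B using Finset.induction_on_max_value τ with
  | empty => simp [hF0]
  | insert m B hm hmax ih =>
    rw [Finset.sum_insert hm]
    have hlt : ∀ x ∈ B, τ x < τ m := fun x hx =>
      lt_of_le_of_ne (hmax x hx) fun h => hm (τ.injective h ▸ hx)
    have h := hsub (insert m B) (univ.filter fun j => τ j < τ m)
    have h1 : insert m B ∪ (univ.filter fun j => τ j < τ m) = univ.filter fun j => τ j ≤ τ m := by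
      ext x
      simp only [mem_union, mem_insert, mem_filter, mem_univ, true_and]
      constructor
      · rintro ((rfl | hx) | hx)
        · exact le_rfl
        · exact (hlt x hx).le
        · exact hx.le
      · intro hx
        rcases hx.lt_or_eq with h | h
        · exact Or.inr h
        · exact Or.inl (Or.inl (τ.injective h))
    have h2 : insert m B ∩ (univ.filter fun j => τ j < τ m) = B := by
      ext x
      simp only [mem_inter, mem_insert, mem_filter, mem_univ, true_and]
      constructor
      · rintro ⟨rfl | hx, h⟩
        · exact absurd h (lt_irrefl _)
        · exact hx
      · exact fun hx => ⟨Or.inr hx, hlt x hx⟩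
    rw [h1, h2] at h
    unfold greedy at ih ⊢
    linarith

/-- On initial segments of `τ` the greedy vector saturates the polymatroid constraint. -/
lemma greedy_sum_eq {F : Finset α → ℝ} (hF0 : F ∅ = 0) {q : ℕ}
    (τ : α ≃ Fin q) (B : Finset α) (hB : ∀ i ∈ B, ∀ j, τ j ≤ τ i → j ∈ B) :
    ∑ i ∈ B, greedy F τ i = F B := by
  induction B using Finset.induction_on_max_value τ with
  | empty => simp [hF0]
  | insert m B hm hmax ih =>
    have hlt : ∀ x ∈ B, τ x < τ m := fun x hx =>
      lt_of_le_of_ne (hmax x hx) fun h => hm (τ.injective h ▸ hx)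
    have h1 : (univ.filter fun j => τ j ≤ τ m) = insert m B := by
      ext x
      simp only [mem_insert, mem_filter, mem_univ, true_and]
      constructor
      · exact fun hx => mem_insert.1 (hB m (mem_insert_self _ _) x hx)
      · rintro (rfl | hx)
        · exact le_rfl
        · exact (hlt x hx).le
    have h2 : (univ.filter fun j => τ j < τ m) = B := by
      ext x
      simp only [mem_filter, mem_univ, true_and]
      constructor
      · intro hx
        rcases mem_insert.1 (hB m (mem_insert_self _ _) x hx.le) with rfl | h
        · exact absurd hx (lt_irrefl _)
        · exact h
      · exact hlt x
    have ih' := ih fun i hi j hj => by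
      rw [← h2]
      simpa using lt_of_le_of_lt hj (hlt i hi)
    rw [Finset.sum_insert hm, ih', greedy, h1, h2]
    ring

omit [DecidableEq α] in
lemma greedy_nonneg {F : Finset α → ℝ} (hmono : MonotoneF F) {q : ℕ}
    (τ : α ≃ Fin q) (i : α) : 0 ≤ greedy F τ i :=
  sub_nonneg.2 (hmono (Finset.monotone_filter_right _ fun _ _ h => le_of_lt h))

omit [DecidableEq α] in
/-- Layer-cake principle: if the sum of `a` over every superlevel set of `w ≥ 0` is nonnegative,
then so is `∑ a w`. Peeling off the lowest positive level reduces the support. -/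
lemma layer_cake (a : α → ℝ) : ∀ (N : ℕ) (w : α → ℝ), (∀ i, 0 ≤ w i) →
    (univ.filter fun i => 0 < w i).card ≤ N →
    (∀ t : ℝ, 0 ≤ t → 0 ≤ ∑ i ∈ univ.filter (fun i => t < w i), a i) →
    0 ≤ ∑ i, a i * w i := by
  intro N
  induction N with
  | zero =>
    intro w hw hN _
    have h0 : ∀ i, w i = 0 := fun i => by
      have : i ∉ univ.filter fun i => 0 < w i := by
        rw [Finset.card_eq_zero.1 (Nat.le_zero.1 hN)]; simp
      exact le_antisymm (by simpa using this) (hw i)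
    simp [h0]
  | succ N ih =>
    intro w hw hN hlev
    by_cases hne : (univ.filter fun i => 0 < w i).Nonempty
    swap
    · have h0 : ∀ i, w i = 0 := fun i => by
        have : i ∉ univ.filter fun i => 0 < w i := by
          rw [Finset.not_nonempty_iff_eq_empty.1 hne]; simp
        exact le_antisymm (by simpa using this) (hw i)
      simp [h0]
    obtain ⟨m, hm, hmin⟩ := Finset.exists_min_image _ w hne
    have hm0 : 0 < w m := by simpa using hm
    have hsplit : ∀ i, a i * w i
        = a i * max (w i - w m) 0 + w m * (if 0 < w i then a i else 0) := by
      intro i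
      by_cases hi : 0 < w i
      · have := hmin i (by simpa using hi)
        rw [max_eq_left (by linarith), if_pos hi]; ring
      · have h0 : w i = 0 := le_antisymm (not_lt.1 hi) (hw i)
        rw [if_neg hi, max_eq_right (by linarith), h0]; ring
    have h1 : 0 ≤ ∑ i, a i * max (w i - w m) 0 := by
      refine ih (fun i => max (w i - w m) 0) (fun i => le_max_right _ _) ?_ ?_
      · refine Nat.le_of_lt_succ (lt_of_lt_of_le (Finset.card_lt_card ?_) hN)
        refine ⟨fun i hi => ?_, fun h => ?_⟩
        · simp only [mem_filter, mem_univ, true_and, lt_max_iff, lt_irrefl, or_false] at hi ⊢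
          linarith
        · simpa using h hm
      · intro t ht
        convert hlev (t + w m) (by linarith) using 2
        ext i
        simp only [mem_filter, mem_univ, true_and, lt_max_iff]
        constructor
        · rintro (h | h) <;> linarith
        · intro h; left; linarith
    have h2 := hlev 0 le_rfl
    rw [Finset.sum_filter] at h2
    rw [Finset.sum_congr rfl fun i _ => hsplit i, Finset.sum_add_distrib, ← Finset.mul_sum]
    exact add_nonneg h1 (mul_nonneg hm0.le h2)

/-- The Lovász extension at `w` is the scalar product of `w` with the greedy vector of some
ordering along which `w` decreases. -/
lemma exists_lovasz_eq (F : Finset α → ℝ) (w : α → ℝ) :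
    ∃ τ : α ≃ Fin (Fintype.card α), (∀ i j, τ i ≤ τ j → w j ≤ w i) ∧
      lovasz F w = ∑ i, greedy F τ i * w i := by
  set e : Fin (Fintype.card α) ≃ α := (Fintype.equivFin α).symm with he
  set σ : Equiv.Perm (Fin (Fintype.card α)) := Tuple.sort (fun i => -(w (e i))) with hσ
  refine ⟨(σ.trans e).symm, fun i j hij => ?_, ?_⟩
  · have h := Tuple.monotone_sort (fun i => -(w (e i))) hij
    simpa [← hσ] using h
  · have hl : lovasz F w = ∑ k : Fin (Fintype.card α), w (e (σ k)) *
      (F ((Finset.univ.filter (fun j => j ≤ k)).image (fun j => e (σ j))) -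
       F ((Finset.univ.filter (fun j => j < k)).image (fun j => e (σ j)))) := rfl
    rw [hl, ← (σ.trans e).sum_comp]
    refine Finset.sum_congr rfl fun k _ => ?_
    have h1 : ((Finset.univ.filter (fun j => j ≤ k)).image (fun j => e (σ j)))
        = univ.filter fun j => (σ.trans e).symm j ≤ k := by
      ext x
      simp only [mem_image, mem_filter, mem_univ, true_and]
      constructor
      · rintro ⟨j, hj, rfl⟩; simpa using hj
      · intro h; exact ⟨_, h, by simp⟩
    have h2 : ((Finset.univ.filter (fun j => j < k)).image (fun j => e (σ j)))
        = univ.filter fun j => (σ.trans e).symm j < k := by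
      ext x
      simp only [mem_image, mem_filter, mem_univ, true_and]
      constructor
      · rintro ⟨j, hj, rfl⟩; simpa using hj
      · intro h; exact ⟨_, h, by simp⟩
    rw [h1, h2, greedy, Equiv.symm_apply_apply, mul_comm]
    rfl

/-- Quantitative duality: a point `s` of the polymatroid satisfies `⟨s, w⟩ ≤ f(w)`, and the gap
controls the slack of the constraint indexed by the support of `w`. -/
lemma lovasz_gap {F : Finset α → ℝ} (hF0 : F ∅ = 0)
    (s w : α → ℝ) (hs : ∀ B, ∑ i ∈ B, s i ≤ F B) (hw : ∀ i, 0 ≤ w i) (c : ℝ) (hc : 0 ≤ c)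
    (hcw : ∀ i, 0 < w i → c ≤ w i) :
    c * (F (univ.filter fun i => 0 < w i) - ∑ i ∈ univ.filter (fun i => 0 < w i), s i)
      ≤ lovasz F w - ∑ i, s i * w i := by
  obtain ⟨τ, hτ, hl⟩ := exists_lovasz_eq F w
  have hlev : ∀ t : ℝ,
      0 ≤ ∑ i ∈ univ.filter (fun i => t < w i), (greedy F τ i - s i) := by
    intro t
    rw [Finset.sum_sub_distrib, greedy_sum_eq hF0 τ]
    · linarith [hs (univ.filter fun i => t < w i)]
    · intro i hi j hij
      simp only [mem_filter, mem_univ, true_and] at hi ⊢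
      exact lt_of_lt_of_le hi (hτ _ _ hij)
  have hA : ∑ i ∈ univ.filter (fun i => 0 < w i), greedy F τ i
      = F (univ.filter fun i => 0 < w i) := by
    refine greedy_sum_eq hF0 τ _ fun i hi j hij => ?_
    simp only [mem_filter, mem_univ, true_and] at hi ⊢
    exact lt_of_lt_of_le hi (hτ _ _ hij)
  -- the truncation `(w - c)⁺` has superlevel sets among those of `w`
  have h1 : 0 ≤ ∑ i, (greedy F τ i - s i) * max (w i - c) 0 := by
    refine layer_cake _ _ (fun i => max (w i - c) 0) (fun i => le_max_right _ _) le_rfl ?_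
    intro t ht
    convert hlev (t + c) using 2
    ext i
    simp only [mem_filter, mem_univ, true_and, lt_max_iff]
    constructor
    · rintro (h | h) <;> linarith
    · intro h; left; linarith
  have hsplit : ∀ i, (greedy F τ i - s i) * w i = (greedy F τ i - s i) * max (w i - c) 0
      + c * (if 0 < w i then greedy F τ i - s i else 0) := by
    intro i
    by_cases hi : 0 < w i
    · have := hcw i hi
      rw [max_eq_left (by linarith), if_pos hi]; ring
    · have h0 : w i = 0 := le_antisymm (not_lt.1 hi) (hw i)
      rw [if_neg hi, max_eq_right (by linarith), h0]; ring
  have h2 : lovasz F w - ∑ i, s i * w i = ∑ i, (greedy F τ i - s i) * w i := by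
    rw [hl, ← Finset.sum_sub_distrib]
    exact Finset.sum_congr rfl fun i _ => by ring
  rw [h2, Finset.sum_congr rfl fun i _ => hsplit i, Finset.sum_add_distrib, ← Finset.mul_sum,
    ← Finset.sum_filter, Finset.sum_sub_distrib, hA]
  linarith

/-- Any `s` in the polymatroid gives a lower bound `⟨s, |w|⟩ ≤ Ω(w)`. -/
lemma le_OmegaF {F : Finset α → ℝ} (hF0 : F ∅ = 0)
    (s w : α → ℝ) (hs : ∀ B, ∑ i ∈ B, s i ≤ F B) : ∑ i, s i * |w i| ≤ OmegaF F w := by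
  have h := lovasz_gap hF0 s (fun i => |w i|) hs (fun i => abs_nonneg _) 0 le_rfl
    (fun i _ => abs_nonneg _)
  rw [zero_mul] at h
  exact sub_nonneg.1 h

/-- The finite family of linear forms whose maximum is `Ω`: greedy vectors with signs in
`{-1, 0, 1}` put on the coordinates. -/
def signedGreedy (F : Finset α → ℝ)
    (x : (α ≃ Fin (Fintype.card α)) × (α → SignType)) (i : α) : ℝ :=
  (x.2 i : ℝ) * greedy F x.1 i

lemma abs_signedGreedy_sum_le {F : Finset α → ℝ} (hsub : Submodular F) (hmono : MonotoneF F)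
    (hF0 : F ∅ = 0) (x : (α ≃ Fin (Fintype.card α)) × (α → SignType)) (B : Finset α) :
    ∑ i ∈ B, |signedGreedy F x i| ≤ F B := by
  refine le_trans (Finset.sum_le_sum fun i _ => ?_) (greedy_sum_le hsub hF0 x.1 B)
  have h0 := greedy_nonneg hmono x.1 i
  rw [signedGreedy, abs_mul, abs_of_nonneg h0]
  refine mul_le_of_le_one_left h0 ?_
  rcases x.2 i <;> simp

lemma signedGreedy_le {F : Finset α → ℝ} (hsub : Submodular F) (hmono : MonotoneF F)
    (hF0 : F ∅ = 0) (x : (α ≃ Fin (Fintype.card α)) × (α → SignType)) (w : α → ℝ) :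
    signedGreedy F x ⬝ᵥ w ≤ OmegaF F w := by
  refine le_trans (Finset.sum_le_sum fun i _ => ?_)
    (le_OmegaF hF0 _ w (abs_signedGreedy_sum_le hsub hmono hF0 x))
  rw [← abs_mul]
  exact le_abs_self _

lemma exists_signedGreedy_eq (F : Finset α → ℝ) (w : α → ℝ) :
    ∃ x, signedGreedy F x ⬝ᵥ w = OmegaF F w := by
  obtain ⟨τ, -, hl⟩ := exists_lovasz_eq F fun i => |w i|
  refine ⟨(τ, fun i => SignType.sign (w i)), ?_⟩
  rw [OmegaF, hl]
  refine Finset.sum_congr rfl fun i _ => ?_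
  rw [signedGreedy, ← sign_mul_self (w i)]
  ring

/-- A form attaining `Ω(w)` vanishes at every `k` outside the support of `w` which can be added to
the support without increasing `F`. -/
lemma signedGreedy_eq_zero {F : Finset α → ℝ} (hsub : Submodular F) (hmono : MonotoneF F)
    (hF0 : F ∅ = 0) (x : (α ≃ Fin (Fintype.card α)) × (α → SignType)) (w : α → ℝ)
    (hx : signedGreedy F x ⬝ᵥ w = OmegaF F w) (k : α) (hk : k ∉ suppF w)
    (hFk : F (insert k (suppF w)) ≤ F (suppF w)) : signedGreedy F x k = 0 := by
  have hs := abs_signedGreedy_sum_le hsub hmono hF0 x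
  have hsupp : (univ.filter fun i => 0 < |w i|) = suppF w := by
    ext i; simp [suppF]
  obtain ⟨c, hc, hcw⟩ : ∃ c : ℝ, 0 < c ∧ ∀ i, 0 < |w i| → c ≤ |w i| := by
    by_cases hne : (univ.filter fun i => 0 < |w i|).Nonempty
    · obtain ⟨m, hm, hmin⟩ := Finset.exists_min_image _ (fun i => |w i|) hne
      exact ⟨|w m|, (mem_filter.1 hm).2, fun i hi => hmin i (mem_filter.2 ⟨mem_univ _, hi⟩)⟩
    · refine ⟨1, one_pos, fun i hi => absurd ⟨i, mem_filter.2 ⟨mem_univ _, hi⟩⟩ hne⟩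
  have h := lovasz_gap hF0 (fun i => |signedGreedy F x i|) (fun i => |w i|) hs
    (fun i => abs_nonneg _) c hc.le hcw
  have h1 : lovasz F (fun i => |w i|) ≤ ∑ i, |signedGreedy F x i| * |w i| := by
    change OmegaF F w ≤ _
    rw [← hx]
    refine Finset.sum_le_sum fun i _ => ?_
    rw [← abs_mul]
    exact le_abs_self _
  rw [hsupp] at h
  have h2 : F (suppF w) - ∑ i ∈ suppF w, |signedGreedy F x i| ≤ 0 := by
    by_contra hcon
    have := mul_pos hc (not_le.1 hcon)
    linarith
  have h3 := hs (insert k (suppF w))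
  rw [Finset.sum_insert hk] at h3
  exact abs_eq_zero.1 (le_antisymm (by linarith) (abs_nonneg _))

end Greedy

/-! ### Least squares penalized by a maximum of linear forms -/

section MaxLinear

variable {p n : ℕ} {ι : Type*} [Fintype ι] {γ : ι → Fin p → ℝ} {Om : (Fin p → ℝ) → ℝ}

/-- The penalized least-squares objective. -/
def objective (X : Matrix (Fin n) (Fin p) ℝ) (lam : ℝ) (Om : (Fin p → ℝ) → ℝ)
    (y : Fin n → ℝ) (w : Fin p → ℝ) : ℝ :=
  (1 / (2 * n)) * (∑ i, (y i - ∑ j, X i j * w j)^2) + lam * Om w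

lemma objective_eq (X : Matrix (Fin n) (Fin p) ℝ) (lam : ℝ) (Om : (Fin p → ℝ) → ℝ)
    (y : Fin n → ℝ) (w : Fin p → ℝ) : objective X lam Om y w =
      (1 / (2 * n)) * ((y - X *ᵥ w) ⬝ᵥ (y - X *ᵥ w)) + lam * Om w := by
  simp [objective, dotProduct, mulVec, pow_two]

lemma continuous_of_max (hle : ∀ x w, γ x ⬝ᵥ w ≤ Om w) (hex : ∀ w, ∃ x, γ x ⬝ᵥ w = Om w) :
    Continuous Om := by
  have hne : (univ : Finset ι).Nonempty := ⟨(hex 0).choose, mem_univ _⟩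
  have h : Om = fun w => univ.sup' hne fun x => γ x ⬝ᵥ w := by
    funext w
    obtain ⟨x, hx⟩ := hex w
    refine le_antisymm ?_ (Finset.sup'_le _ _ fun x _ => hle x w)
    rw [← hx]
    exact Finset.le_sup' (fun x => γ x ⬝ᵥ w) (mem_univ x)
  rw [h]
  refine Continuous.finset_sup'_apply hne fun x _ => ?_
  fun_prop

omit [Fintype ι] in
lemma minimizer_unique (hn : 1 ≤ n) (X : Matrix (Fin n) (Fin p) ℝ)
    (hX : Function.Injective X.mulVec) (lam : ℝ) (hlam : 0 < lam)
    (hle : ∀ x w, γ x ⬝ᵥ w ≤ Om w) (hex : ∀ w, ∃ x, γ x ⬝ᵥ w = Om w) (y : Fin n → ℝ)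
    (w₁ w₂ : Fin p → ℝ) (h₁ : ∀ w', objective X lam Om y w₁ ≤ objective X lam Om y w')
    (h₂ : ∀ w', objective X lam Om y w₂ ≤ objective X lam Om y w') : w₁ = w₂ := by
  by_contra hne
  set m : Fin p → ℝ := (1 / 2 : ℝ) • (w₁ + w₂) with hm
  have hOm : Om m ≤ (Om w₁ + Om w₂) / 2 := by
    obtain ⟨x, hx⟩ := hex m
    rw [← hx, hm, dotProduct_smul, dotProduct_add, smul_eq_mul]
    linarith [hle x w₁, hle x w₂]
  have hd : 0 < (X *ᵥ w₁ - X *ᵥ w₂) ⬝ᵥ (X *ᵥ w₁ - X *ᵥ w₂) := by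
    refine lt_of_le_of_ne (Finset.sum_nonneg fun i _ => mul_self_nonneg _) fun h => hne (hX ?_)
    exact sub_eq_zero.1 (dotProduct_self_eq_zero.1 h.symm)
  have hpar : (y - X *ᵥ m) ⬝ᵥ (y - X *ᵥ m) = ((y - X *ᵥ w₁) ⬝ᵥ (y - X *ᵥ w₁)
      + (y - X *ᵥ w₂) ⬝ᵥ (y - X *ᵥ w₂)) / 2
      - (X *ᵥ w₁ - X *ᵥ w₂) ⬝ᵥ (X *ᵥ w₁ - X *ᵥ w₂) / 4 := by
    simp only [hm, mulVec_smul, mulVec_add, dotProduct]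
    rw [← Finset.sum_add_distrib, Finset.sum_div, Finset.sum_div, ← Finset.sum_sub_distrib]
    refine Finset.sum_congr rfl fun i _ => ?_
    simp only [Pi.sub_apply, Pi.smul_apply, Pi.add_apply, smul_eq_mul]
    ring
  have hn' : (0 : ℝ) < 1 / (2 * n) := by
    have : (0 : ℝ) < n := by exact_mod_cast hn
    positivity
  have e₁ := h₁ m
  have e₂ := h₂ m
  rw [objective_eq, objective_eq, hpar] at e₁ e₂
  nlinarith [mul_pos hn' hd, mul_le_mul_of_nonneg_left hOm hlam.le]

/-- First-order condition along a direction on which all forms attaining `Om w` agree. -/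
lemma first_order (hn : 1 ≤ n) (X : Matrix (Fin n) (Fin p) ℝ) (lam : ℝ) (hlam : 0 < lam)
    (hle : ∀ x w, γ x ⬝ᵥ w ≤ Om w) (hex : ∀ w, ∃ x, γ x ⬝ᵥ w = Om w) (y : Fin n → ℝ)
    (w : Fin p → ℝ) (hw : ∀ w', objective X lam Om y w ≤ objective X lam Om y w')
    (u : Fin p → ℝ) (c : ℝ) (hu : ∀ x, γ x ⬝ᵥ w = Om w → γ x ⬝ᵥ u = c) :
    X *ᵥ u ⬝ᵥ (y - X *ᵥ w) = n * lam * c := by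
  have hev : ∀ᶠ t : ℝ in 𝓝 0, ∀ x, γ x ⬝ᵥ w + t * (γ x ⬝ᵥ u) ≤ Om w + t * c := by
    rw [eventually_all]
    intro x
    rcases (hle x w).lt_or_eq with h | h
    · have h1 : Tendsto (fun t : ℝ => γ x ⬝ᵥ w + t * (γ x ⬝ᵥ u)) (𝓝 0) (𝓝 (γ x ⬝ᵥ w)) := by
        have : Continuous fun t : ℝ => γ x ⬝ᵥ w + t * (γ x ⬝ᵥ u) := by fun_prop
        simpa using this.tendsto 0
      have h2 : Tendsto (fun t : ℝ => Om w + t * c) (𝓝 0) (𝓝 (Om w)) := by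
        have : Continuous fun t : ℝ => Om w + t * c := by fun_prop
        simpa using this.tendsto 0
      filter_upwards [h1.eventually_lt h2 h] with t ht using ht.le
    · exact Eventually.of_forall fun t => by rw [hu x h, h]
  have hn' : (0 : ℝ) < n := by exact_mod_cast hn
  -- the objective along `w + t u` is bounded by a quadratic polynomial in `t`
  have hquad : ∀ᶠ t : ℝ in 𝓝 0,
      0 ≤ t * (2 * (n * lam * c - X *ᵥ u ⬝ᵥ (y - X *ᵥ w)) + t * (X *ᵥ u ⬝ᵥ X *ᵥ u)) := by
    filter_upwards [hev] with t ht
    have hOm : Om (w + t • u) ≤ Om w + t * c := by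
      obtain ⟨x, hx⟩ := hex (w + t • u)
      rw [← hx, dotProduct_add, dotProduct_smul, smul_eq_mul]
      exact ht x
    have h := hw (w + t • u)
    have hexp : (y - X *ᵥ (w + t • u)) ⬝ᵥ (y - X *ᵥ (w + t • u))
        = (y - X *ᵥ w) ⬝ᵥ (y - X *ᵥ w) - 2 * t * (X *ᵥ u ⬝ᵥ (y - X *ᵥ w))
          + t ^ 2 * (X *ᵥ u ⬝ᵥ X *ᵥ u) := by
      simp only [mulVec_smul, mulVec_add, dotProduct, Finset.mul_sum]
      rw [← Finset.sum_sub_distrib, ← Finset.sum_add_distrib]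
      refine Finset.sum_congr rfl fun i _ => ?_
      simp only [Pi.sub_apply, Pi.smul_apply, Pi.add_apply, smul_eq_mul]
      ring
    rw [objective_eq, objective_eq, hexp] at h
    have h' : 0 ≤ (1 / (2 * n) : ℝ) *
        (- 2 * t * (X *ᵥ u ⬝ᵥ (y - X *ᵥ w)) + t ^ 2 * (X *ᵥ u ⬝ᵥ X *ᵥ u)) + lam * (t * c) := by
      nlinarith [mul_le_mul_of_nonneg_left hOm hlam.le]
    have h'' := mul_nonneg (by positivity : (0 : ℝ) ≤ 2 * n) h'
    rw [mul_add, ← mul_assoc, mul_one_div_cancel (by positivity)] at h''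
    linarith
  set q := X *ᵥ u ⬝ᵥ X *ᵥ u
  set b := n * lam * c - X *ᵥ u ⬝ᵥ (y - X *ᵥ w) with hb
  have hcont : Tendsto (fun t : ℝ => 2 * b + t * q) (𝓝 0) (𝓝 (2 * b)) := by
    have : Continuous fun t : ℝ => 2 * b + t * q := by fun_prop
    simpa using this.tendsto 0
  have hb0 : b = 0 := by
    rcases lt_trichotomy b 0 with h | h | h
    · have hc := hquad.and (hcont.eventually_lt_const (show 2 * b < 0 by linarith))
      obtain ⟨t, ht0, ht1, ht2⟩ := ((frequently_gt_nhds (0 : ℝ)).and_eventually hc).exists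
      nlinarith [mul_pos ht0 (neg_pos.2 ht2)]
    · exact h
    · have hc := hquad.and (hcont.eventually_const_lt (show 0 < 2 * b by linarith))
      obtain ⟨t, ht0, ht1, ht2⟩ := ((frequently_lt_nhds (0 : ℝ)).and_eventually hc).exists
      nlinarith [mul_pos (neg_pos.2 ht0) ht2]
  linarith

/-- A vector outside a subspace `U` can be corrected by an element of `U` so that its image under
`X` becomes orthogonal to `X U`. -/
lemma exists_orthogonal_correction (X : Matrix (Fin n) (Fin p) ℝ) (U : Submodule ℝ (Fin p → ℝ))
    (e : Fin p → ℝ) : ∃ u₀ ∈ U, ∀ u ∈ U, X *ᵥ (e - u₀) ⬝ᵥ X *ᵥ u = 0 := by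
  let L : (Fin p → ℝ) →ₗ[ℝ] EuclideanSpace ℝ (Fin n) :=
    (WithLp.linearEquiv 2 ℝ (Fin n → ℝ)).symm.toLinearMap ∘ₗ X.mulVecLin
  obtain ⟨u₀, hu₀, h₀⟩ := (U.map L).starProjection_apply_mem (L e)
  refine ⟨u₀, hu₀, fun u hu => ?_⟩
  have h := (U.map L).starProjection_inner_eq_zero (L e) (L u) ⟨u, hu, rfl⟩
  rw [← h₀, ← map_sub, PiLp.inner_apply] at h
  rw [dotProduct, ← h]
  refine Finset.sum_congr rfl fun i _ => ?_
  simp [L, mul_comm]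

lemma hyperplane_null (d : Fin n → ℝ) (hd : d ≠ 0) (b : ℝ) :
    (volume : Measure (Fin n → ℝ)) {y | d ⬝ᵥ y = b} = 0 := by
  let S : AffineSubspace ℝ (Fin n → ℝ) :=
    { carrier := {y | d ⬝ᵥ y = b}
      smul_vsub_vadd_mem' := by
        intro c p₁ p₂ p₃ h₁ h₂ h₃
        simp only [Set.mem_ofPred_eq] at h₁ h₂ h₃ ⊢
        simp [dotProduct_add, dotProduct_sub, h₁, h₂, h₃] }
  refine Measure.addHaar_affineSubspace volume S fun htop => hd ?_
  have hall : ∀ y, d ⬝ᵥ y = b := fun y => by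
    have : y ∈ S := htop ▸ AffineSubspace.mem_top ℝ _ y
    exact this
  have h0 := hall 0
  rw [dotProduct_zero] at h0
  exact dotProduct_self_eq_zero.1 ((hall d).trans h0.symm)

/-- For a fixed set `T` of attaining forms, all vanishing at `k`, the observations having a
minimizer with `w k = 0` and attaining set `T` lie on a hyperplane. -/
lemma bad_null (hn : 1 ≤ n) (X : Matrix (Fin n) (Fin p) ℝ) (hX : Function.Injective X.mulVec)
    (lam : ℝ) (hlam : 0 < lam)
    (hle : ∀ x w, γ x ⬝ᵥ w ≤ Om w) (hex : ∀ w, ∃ x, γ x ⬝ᵥ w = Om w)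
    (T : Set ι) (k : Fin p) (hT : ∀ x ∈ T, γ x k = 0) :
    (volume : Measure (Fin n → ℝ)) {y | ∃ w, (∀ w', objective X lam Om y w ≤ objective X lam Om y w')
      ∧ {x | γ x ⬝ᵥ w = Om w} = T ∧ w k = 0} = 0 := by
  by_cases hTe : T.Nonempty
  swap
  · convert measure_empty (μ := (volume : Measure (Fin n → ℝ)))
    ext y
    simp only [Set.mem_ofPred_eq, Set.mem_empty_iff_false, iff_false]
    rintro ⟨w, -, h, -⟩
    exact hTe (h ▸ hex w)
  obtain ⟨x₀, hx₀⟩ := hTe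
  let U : Submodule ℝ (Fin p → ℝ) :=
    { carrier := {u | (∀ x ∈ T, γ x ⬝ᵥ u = γ x₀ ⬝ᵥ u) ∧ u k = 0}
      add_mem' := by
        rintro a b ⟨ha, ha'⟩ ⟨hb, hb'⟩
        exact ⟨fun x hx => by rw [dotProduct_add, dotProduct_add, ha x hx, hb x hx],
          by simp [ha', hb']⟩
      zero_mem' := by simp
      smul_mem' := by
        rintro c a ⟨ha, ha'⟩
        exact ⟨fun x hx => by rw [dotProduct_smul, dotProduct_smul, ha x hx], by simp [ha']⟩ }
  obtain ⟨u₀, hu₀, horth⟩ := exists_orthogonal_correction X U (Pi.single k 1)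
  have hv : ∀ x ∈ T, γ x ⬝ᵥ (Pi.single k 1 - u₀) = γ x₀ ⬝ᵥ (Pi.single k 1 - u₀) := by
    intro x hx
    rw [dotProduct_sub, dotProduct_sub, dotProduct_single, dotProduct_single, hT x hx, hT x₀ hx₀,
      hu₀.1 x hx]
  have hd : X *ᵥ (Pi.single k 1 - u₀) ≠ 0 := by
    intro h
    have h1 : Pi.single k 1 - u₀ = 0 := hX (h.trans (mulVec_zero X).symm)
    have h2 := congrFun h1 k
    simp [show u₀ k = 0 from hu₀.2] at h2
  refine measure_mono_null ?_ (hyperplane_null _ hd (n * lam * (γ x₀ ⬝ᵥ (Pi.single k 1 - u₀))))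
  rintro y ⟨w, hw, hwT, hwk⟩
  have hact : ∀ x, γ x ⬝ᵥ w = Om w ↔ x ∈ T := fun x => by rw [← hwT]; rfl
  have hwU : w ∈ U := ⟨fun x hx => by rw [(hact x).2 hx, (hact x₀).2 hx₀], hwk⟩
  have h := first_order hn X lam hlam hle hex y w hw (Pi.single k 1 - u₀) _
    fun x hx => hv x ((hact x).1 hx)
  rw [dotProduct_sub, horth w hwU, sub_zero] at h
  exact h

end MaxLinear

/-! ### Uniqueness of the minimizer and stability of its support -/

/-- stable sparsity patterns: if `XᵀX` is invertible and the law of `y` is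
absolutely continuous w.r.t. Lebesgue measure, the minimizer of the regularized
least-squares problem is unique for every `y`, and almost surely its support is stable. -/
theorem omega_stable_patterns {p n : ℕ} (hp : 1 ≤ p) (hn : 1 ≤ n)
    (F : Finset (Fin p) → ℝ)
    (hsub : Submodular F) (hmono : MonotoneF F) (hF0 : F ∅ = 0)
    (hFpos : ∀ k : Fin p, 0 < F {k})
    (X : Matrix (Fin n) (Fin p) ℝ) (hX : IsUnit (X.transpose * X))
    (lam : ℝ) (hlam : 0 < lam)
    (μ : Measure (Fin n → ℝ)) [IsProbabilityMeasure μ] (hμ : μ ≪ volume) :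
    (∀ y : Fin n → ℝ, ∃! w : Fin p → ℝ, ∀ w' : Fin p → ℝ,
      (1 / (2 * n)) * (∑ i, (y i - ∑ j, X i j * w j)^2) + lam * OmegaF F w ≤
        (1 / (2 * n)) * (∑ i, (y i - ∑ j, X i j * w' j)^2) + lam * OmegaF F w') ∧
    (∀ᵐ y ∂μ, ∀ w : Fin p → ℝ,
      (∀ w' : Fin p → ℝ,
        (1 / (2 * n)) * (∑ i, (y i - ∑ j, X i j * w j)^2) + lam * OmegaF F w ≤
          (1 / (2 * n)) * (∑ i, (y i - ∑ j, X i j * w' j)^2) + lam * OmegaF F w') →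
      StableSet F (suppF w)) := by
  have hle := signedGreedy_le hsub hmono hF0
  have hex := exists_signedGreedy_eq F
  have hXinj : Function.Injective X.mulVec := by
    intro a b hab
    have h : (X.transpose * X) *ᵥ a = (X.transpose * X) *ᵥ b := by
      rw [← mulVec_mulVec, ← mulVec_mulVec]
      exact congrArg _ hab
    exact Matrix.mulVec_injective_of_isUnit hX h
  have hcont := continuous_of_max hle hex
  refine ⟨fun y => ?_, ?_⟩
  · have hobj : Continuous (objective X lam (OmegaF F) y) := by
      unfold objective
      fun_prop
    have : Nonempty (Fin p) := ⟨⟨0, hp⟩⟩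
    obtain ⟨k₀, hk₀⟩ := Finite.exists_min fun k : Fin p => F {k}
    -- `F {k} e_k` lies in the polymatroid, so `Ω` dominates a multiple of the sup norm
    have hOm : ∀ w, F {k₀} * ‖w‖ ≤ OmegaF F w := by
      intro w
      have hcoord : ∀ k, F {k} * |w k| ≤ OmegaF F w := by
        intro k
        have h := le_OmegaF hF0 (Pi.single k (F {k})) w ?_
        · simpa [Pi.single_apply] using h
        · intro B
          simp only [Pi.single_apply, Finset.sum_ite_eq']
          split_ifs with hk
          · exact hmono (by simpa using hk)
          · simpa [hF0] using hmono (Finset.empty_subset B)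
      have h2 : ‖w‖ ≤ OmegaF F w / F {k₀} := by
        refine (pi_norm_le_iff_of_nonempty w).2 fun k => ?_
        rw [le_div_iff₀ (hFpos k₀), Real.norm_eq_abs, mul_comm]
        exact (mul_le_mul_of_nonneg_right (hk₀ k) (abs_nonneg _)).trans (hcoord k)
      rw [le_div_iff₀ (hFpos k₀)] at h2
      linarith
    have hlim : Tendsto (objective X lam (OmegaF F) y) (cocompact _) atTop := by
      refine tendsto_atTop_mono (f := fun w => lam * F {k₀} * ‖w‖) (fun w => ?_)
        ((tendsto_norm_cocompact_atTop (E := Fin p → ℝ)).const_mul_atTop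
          (mul_pos hlam (hFpos k₀)))
      have h1 : (0 : ℝ) ≤ (1 / (2 * n)) * (∑ i, (y i - ∑ j, X i j * w j)^2) := by positivity
      have h2 := mul_le_mul_of_nonneg_left (hOm w) hlam.le
      unfold objective
      linarith
    obtain ⟨w, hw⟩ := hobj.exists_forall_le hlim
    exact ⟨w, hw, fun w' hw' => minimizer_unique hn X hXinj lam hlam hle hex y w' w hw' hw⟩
  · have hae : ∀ᵐ y ∂μ, ∀ (T : Set ((Fin p ≃ Fin (Fintype.card (Fin p))) × (Fin p → SignType)))
        (k : Fin p), (∀ x ∈ T, signedGreedy F x k = 0) →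
        ¬ ∃ w, (∀ w', objective X lam (OmegaF F) y w ≤ objective X lam (OmegaF F) y w')
          ∧ {x | signedGreedy F x ⬝ᵥ w = OmegaF F w} = T ∧ w k = 0 := by
      refine hμ.ae_le (?_ : ∀ᵐ y ∂volume, _)
      rw [ae_all_iff]
      intro T
      rw [ae_all_iff]
      intro k
      by_cases hT : ∀ x ∈ T, signedGreedy F x k = 0
      · rw [ae_iff]
        refine measure_mono_null (fun y hy => ?_) (bad_null hn X hXinj lam hlam hle hex T k hT)
        exact not_not.1 fun h => hy fun _ => h
      · exact Eventually.of_forall fun y h => absurd h hT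
    filter_upwards [hae] with y hy w hw B hAB hne
    by_contra hcon
    obtain ⟨k, hkB, hkA⟩ := Finset.exists_of_ssubset (hAB.ssubset_of_ne hne)
    have hFk : F (insert k (suppF w)) ≤ F (suppF w) :=
      (hmono (Finset.insert_subset hkB hAB)).trans (not_lt.1 hcon)
    refine hy _ k (fun x hx => ?_) ⟨w, hw, rfl, by simpa [suppF] using hkA⟩
    exact signedGreedy_eq_zero hsub hmono hF0 x w hx k hkA hFk
end
end
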